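/- Suppose Assumptions (K) and (A_p) hold, let ε₀ = R/(8M), and denote rₙ = R/(n+1) and R_k = 2R − k·rₙ for k = 0,…,n+1. For every positive integer n and every ε > 0 with (n+1)ε ≤ ε₀: the maps Φ^[k], k = 0,…,n, of the stroboscopic averaging iteration are analytic in u on K_{R_k}; both Φ^[n] and its average ⟨Φ^[n]⟩ are invertible with analytic inverse on K_R; each Φ^[k] is (p+1) times continuously differentiable with respect to θ, its θ-derivatives are analytic in u on K_{R_k}, and for all k = 0,…,n and all 1 ≤ ν ≤ p+1 one has ‖∂_θ^ν Φ^[k]‖_{R_k} ≤ 8·ε·M·ν!. -/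

import Mathlib

open Set

/-- The set `K_ρ = {u + ũ : u ∈ closure K, ‖ũ‖ ≤ ρ}` inside the complexification `Xc` of `X`. -/
def Kset {X Xc : Type*} [NormedAddCommGroup X] [NormedSpace ℝ X]
    [NormedAddCommGroup Xc] [NormedSpace ℂ Xc]
    (ι : X →ₗᵢ[ℝ] Xc) (K : Set X) (ρ : ℝ) : Set Xc :=
  {z | ∃ u ∈ closure K, ∃ w : Xc, ‖w‖ ≤ ρ ∧ z = ι u + w}

/-- θ-average `⟨g⟩(u) = ∫₀¹ g_θ(u) dθ` of a 1-periodic map. -/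
noncomputable def thAvg {Xc : Type*} [NormedAddCommGroup Xc] [NormedSpace ℂ Xc]
    (g : ℝ → Xc → Xc) (u : Xc) : Xc :=
  ∫ θ in (0:ℝ)..1, g θ u

/-- Averaged vector field `F(u) = (∂_u⟨φ⟩(u))⁻¹ ⟨f∘φ⟩(u)`. -/
noncomputable def aveField {Xc : Type*} [NormedAddCommGroup Xc] [NormedSpace ℂ Xc]
    (f φ : ℝ → Xc → Xc) (u : Xc) : Xc :=
  (fderiv ℂ (thAvg φ) u).inverse (thAvg (fun θ v => f θ (φ θ v)) u)

/-- The stroboscopic averaging iteration: `Φ^[0] = id` and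
`Φ^[k+1]_θ(u) = u + ε ∫₀^θ ( f_τ(Φ^[k]_τ(u)) − ∂_uΦ^[k]_τ(u) F^[k](u) ) dτ`. -/
noncomputable def PhiIter {Xc : Type*} [NormedAddCommGroup Xc] [NormedSpace ℂ Xc]
    (f : ℝ → Xc → Xc) (ε : ℝ) : ℕ → ℝ → Xc → Xc
  | 0 => fun _ u => u
  | k+1 => fun θ u => u + ε • ∫ τ in (0:ℝ)..θ,
      (f τ (PhiIter f ε k τ u) -
        fderiv ℂ (PhiIter f ε k τ) u (aveField f (PhiIter f ε k) u))

open Metric Filter Topology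

/-!
Write `N = Φ^[k] - id`. The averaging step integrates a defect with zero mean over one period, so
only half a period counts and `N` stays of size `O(εM)`; losing a width `r = 7εM` of domain at each
step, Cauchy's estimates turn this into `‖∂_u N‖ ≤ 1 / 5`, which makes `∂_u⟨Φ^[k]⟩` invertible by a
Neumann series and `Φ^[n]`, `⟨Φ^[n]⟩` invertible by a contraction argument. Since `rₙ ≥ 8εM`, the
`n + 1` losses fit between `K_{2R}` and `K_R`.

For the derivatives in `θ`, the bounds `ν! C` for `ν ≤ m` come from a function of a complex
time `s`, holomorphic and bounded by `C` on the unit disc, that agrees with `g_{θ+s}` to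
order `m` at `s = 0`. Such jets can be composed, differentiated in `u` and integrated in `s`, so
the constants close up under the iteration for every `p` simultaneously. Assumption (A_p) with
`σ = 3` provides the jet of `f` with bound `M ∑_j 3⁻ʲ ≤ 3M / 2`.
-/

universe u

theorem exists_ball_forall_norm_le {E Y : Type*} [PseudoMetricSpace E]
    [SeminormedAddCommGroup Y] {f : E → Y} {U : Set E} (hU : IsOpen U)
    (hf : ContinuousOn f U) {u : E} (hu : u ∈ U) :
    ∃ δ C : ℝ, 0 < δ ∧ ball u δ ⊆ U ∧ ∀ y ∈ ball u δ, ‖f y‖ ≤ C := by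
  have h_near : ∀ᶠ y in 𝓝 u, ‖f y‖ < ‖f u‖ + 1 :=
    (hf.continuousAt (hU.mem_nhds hu)).norm.eventually_lt_const (lt_add_one _)
  obtain ⟨δ, hδ, h⟩ := Metric.mem_nhds_iff.mp (inter_mem (hU.mem_nhds hu) h_near)
  exact ⟨δ, ‖f u‖ + 1, hδ, fun y hy => (h hy).1, fun y hy => (h hy).2.le⟩

section Holomorphy

variable {E Y : Type*} [NormedAddCommGroup E] [NormedSpace ℂ E]
  [NormedAddCommGroup Y] [NormedSpace ℂ Y]

theorem hasDerivAt_comp_line {f : E → Y} {x w : E} {z : ℂ}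
    (h : DifferentiableAt ℂ f (x + z • w)) :
    HasDerivAt (fun z : ℂ => f (x + z • w)) (fderiv ℂ f (x + z • w) w) z := by
  have h_line : HasDerivAt (fun z : ℂ => x + z • w) w z := by
    simpa only [id_eq, one_smul] using ((hasDerivAt_id z).smul_const w).const_add x
  exact h.hasFDerivAt.comp_hasDerivAt z h_line

theorem differentiableOn_comp_line {f : E → Y} {U : Set E} {x w : E} {s : Set ℂ} (hU : IsOpen U)
    (hf : DifferentiableOn ℂ f U) (hs : ∀ z ∈ s, x + z • w ∈ U) :
    DifferentiableOn ℂ (fun z : ℂ => f (x + z • w)) s := fun z hz =>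
  (hasDerivAt_comp_line
    (hf.differentiableAt (hU.mem_nhds (hs z hz)))).differentiableAt.differentiableWithinAt

theorem norm_fderiv_le_div_of_forall_mem_ball_norm_le {f : E → Y} {x : E} {δ C : ℝ} (hδ : 0 < δ)
    (hf : DifferentiableOn ℂ f (ball x δ)) (hC : ∀ y ∈ ball x δ, ‖f y‖ ≤ C) :
    ‖fderiv ℂ f x‖ ≤ C / δ := by
  have on_smaller_ball : ∀ d ∈ Ioo 0 δ, ‖fderiv ℂ f x‖ ≤ C / d := fun d hd => by
    have hC₀ : 0 ≤ C := (norm_nonneg _).trans (hC x (mem_ball_self hδ))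
    have hd₀ : 0 < d := hd.1
    refine ContinuousLinearMap.opNorm_le_bound' _ (by positivity) fun w hw => ?_
    have hdw : 0 < d / ‖w‖ := by positivity
    have h_mem : ∀ z ∈ closedBall (0 : ℂ) (d / ‖w‖), x + z • w ∈ ball x δ := fun z hz => by
      rw [mem_closedBall_zero_iff, le_div_iff₀ (by positivity)] at hz
      rw [mem_ball_iff_norm, add_sub_cancel_left, norm_smul]
      exact hz.trans_lt hd.2
    have h_deriv := Complex.norm_deriv_le_of_forall_mem_sphere_norm_le hdw
      ((differentiableOn_comp_line isOpen_ball hf h_mem).diffContOnCl_ball Subset.rfl)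
      fun z hz => hC _ (h_mem z (sphere_subset_closedBall hz))
    have hx : DifferentiableAt ℂ f (x + (0 : ℂ) • w) :=
      hf.differentiableAt (isOpen_ball.mem_nhds (by simpa using hδ))
    rw [(hasDerivAt_comp_line hx).deriv, zero_smul, add_zero] at h_deriv
    exact h_deriv.trans_eq (by field_simp)
  have h_tendsto : Tendsto (fun d => C / d) (𝓝[<] δ) (𝓝 (C / δ)) :=
    (continuousAt_const.div continuousAt_id hδ.ne').continuousWithinAt
  exact ge_of_tendsto h_tendsto
    (mem_of_superset (Ioo_mem_nhdsLT hδ) on_smaller_ball)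

theorem norm_fderiv_le_div_of_mem_ball {f : E → Y} {u y : E} {δ δ' C : ℝ}
    (hf : DifferentiableOn ℂ f (ball u δ)) (hC : ∀ y ∈ ball u δ, ‖f y‖ ≤ C)
    (hδ : δ' < δ) (hy : y ∈ closedBall u δ') : ‖fderiv ℂ f y‖ ≤ C / (δ - δ') := by
  have h_sub : ball y (δ - δ') ⊆ ball u δ :=
    ball_subset_ball' (by linarith [mem_closedBall.mp hy])
  exact norm_fderiv_le_div_of_forall_mem_ball_norm_le (sub_pos.mpr hδ) (hf.mono h_sub)
    fun z hz => hC z (h_sub hz)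

theorem norm_sub_le_of_forall_mem_ball_norm_le {f : E → Y} {u x y : E} {δ δ' C : ℝ}
    (hf : DifferentiableOn ℂ f (ball u δ)) (hC : ∀ y ∈ ball u δ, ‖f y‖ ≤ C)
    (hδ : δ' < δ) (hx : x ∈ closedBall u δ') (hy : y ∈ closedBall u δ') :
    ‖f x - f y‖ ≤ C / (δ - δ') * ‖x - y‖ :=
  (convex_closedBall u δ').norm_image_sub_le_of_norm_fderiv_le (𝕜 := ℂ)
    (fun _ hz => hf.differentiableAt (isOpen_ball.mem_nhds (closedBall_subset_ball hδ hz)))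
    (fun _ hz => norm_fderiv_le_div_of_mem_ball hf hC hδ hz) hy hx

theorem norm_add_sub_sub_fderiv_le {f : E → Y} {x v : E} {δ C : ℝ}
    (hf : DifferentiableOn ℂ f (ball x δ)) (hC : ∀ y ∈ ball x δ, ‖f y‖ ≤ C) (hv : ‖v‖ < δ) :
    ‖f (x + v) - f x - fderiv ℂ f x v‖ ≤ 3 * C / δ ^ 2 * ‖v‖ ^ 2 := by
  have hδ : 0 < δ := (norm_nonneg v).trans_lt hv
  have hx : x ∈ ball x δ := mem_ball_self hδ
  set L := fderiv ℂ f x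
  have hL : ‖L‖ ≤ C / δ := norm_fderiv_le_div_of_forall_mem_ball_norm_le hδ hf hC
  set h : E → Y := fun z => f z - L (z - x)
  have h_sub : ∀ z, h z - h x = f z - f x - L (z - x) := fun z => by
    simp only [h, sub_self, map_zero]; abel
  have h_maps : MapsTo h (ball x δ) (closedBall (h x) (3 * C)) := fun z hz => by
    rw [mem_closedBall_iff_norm, h_sub]
    have h_lin : ‖L (z - x)‖ ≤ C := calc
      ‖L (z - x)‖ ≤ C / δ * δ := L.le_of_opNorm_le_of_le hL (mem_ball_iff_norm.mp hz).le
      _ = C := div_mul_cancel₀ C hδ.ne'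
    linarith [norm_sub_le (f z - f x) (L (z - x)), norm_sub_le (f z) (f x), hC z hz, hC x hx]
  have h_littleO : (h · - h x) =o[𝓝 x] fun w => ‖w - x‖ ^ 1 := by
    simpa only [h_sub, pow_one] using
      (hf.differentiableAt (isOpen_ball.mem_nhds hx)).hasFDerivAt.isLittleO.norm_right
  have h_diff : DifferentiableOn ℂ h (ball x δ) := hf.sub (by fun_prop)
  have schwarz := Complex.dist_le_mul_div_pow_of_mapsTo_ball_of_isLittleO h_diff
    h_maps h_littleO (z := x + v) (by simpa using hv)
  rw [dist_eq_norm, h_sub, dist_self_add_left, add_sub_cancel_left] at schwarz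
  exact schwarz.trans_eq (by rw [div_pow]; ring)

theorem hasFDerivAt_of_norm_sub_le_sq {f : E → Y} {L : E →L[ℂ] Y} {u : E} {δ C : ℝ} (hδ : 0 < δ)
    (h : ∀ v, ‖v‖ < δ → ‖f (u + v) - f u - L v‖ ≤ C * ‖v‖ ^ 2) : HasFDerivAt f L u := by
  rw [hasFDerivAt_iff_isLittleO_nhds_zero]
  refine (Asymptotics.IsBigO.of_bound C ?_).trans_isLittleO
    (Asymptotics.isLittleO_norm_pow_id one_lt_two)
  filter_upwards [ball_mem_nhds 0 hδ] with v hv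
  simpa using h v (mem_ball_zero_iff.mp hv)

theorem differentiableAt_of_tendstoUniformlyOn_ball [CompleteSpace Y] {ι : Type*} {l : Filter ι}
    [l.NeBot] {F : ι → E → Y} {f : E → Y} {x : E} {δ : ℝ} (hδ : 0 < δ)
    (hF : ∀ n, DifferentiableOn ℂ (F n) (ball x δ)) (h : TendstoUniformlyOn F f l (ball x δ)) :
    DifferentiableAt ℂ f x := by
  have h_sub : ball x (δ / 2) ⊆ ball x δ := ball_subset_ball (by linarith)
  have cauchy_fderiv : UniformCauchySeqOn (fun n => fderiv ℂ (F n)) l (ball x (δ / 2)) := by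
    intro V hV
    obtain ⟨c, hc, hcV⟩ := Metric.mem_uniformity_dist.mp hV
    have h_close := h.uniformCauchySeqOn _ (Metric.dist_mem_uniformity (ε := c * (δ / 4))
      (by positivity))
    filter_upwards [h_close] with n hn y hy
    refine hcV ?_
    have h_diff : ∀ i, DifferentiableAt ℂ (F i) y := fun i =>
      (hF i).differentiableAt (isOpen_ball.mem_nhds (h_sub hy))
    rw [dist_eq_norm, ← fderiv_sub (h_diff n.1) (h_diff n.2)]
    refine (norm_fderiv_le_div_of_mem_ball ((hF n.1).sub (hF n.2))
      (fun z hz => (dist_eq_norm (F n.1 z) (F n.2 z)).symm.trans_le (hn z hz).le)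
      (half_lt_self hδ) (ball_subset_closedBall hy)).trans_lt ?_
    rw [div_lt_iff₀ (by linarith)]
    nlinarith
  have h_lim : ∀ y ∈ ball x (δ / 2), ∃ L, Tendsto (fun n => fderiv ℂ (F n) y) l (𝓝 L) :=
    fun y hy => CompleteSpace.complete (cauchy_fderiv.cauchy_map hy)
  choose! f' hf' using h_lim
  exact (hasFDerivAt_of_tendstoUniformlyOn isOpen_ball
    (cauchy_fderiv.tendstoUniformlyOn_of_tendsto hf')
    (fun n y hy => ((hF n).differentiableAt (isOpen_ball.mem_nhds (h_sub hy))).hasFDerivAt)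
    (fun y hy => h.tendsto_at (h_sub hy))
    (mem_ball_self (half_pos hδ))).differentiableAt

end Holomorphy

section Analyticity

variable {E Y : Type*} [NormedAddCommGroup E] [NormedSpace ℂ E]
  [NormedAddCommGroup Y] [NormedSpace ℂ Y]

theorem norm_slope_sub_fderiv_le {f : E → Y} {x w : E} {ζ : ℂ} {δ C : ℝ} (hζ : ζ ≠ 0)
    (hf : DifferentiableOn ℂ f (ball x δ)) (hC : ∀ y ∈ ball x δ, ‖f y‖ ≤ C)
    (hζw : ‖ζ • w‖ < δ) :
    ‖ζ⁻¹ • (f (x + ζ • w) - f x) - fderiv ℂ f x w‖ ≤ 3 * C / δ ^ 2 * ‖w‖ ^ 2 * ‖ζ‖ := by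
  have h_factor : ζ⁻¹ • (f (x + ζ • w) - f x) - fderiv ℂ f x w
      = ζ⁻¹ • (f (x + ζ • w) - f x - fderiv ℂ f x (ζ • w)) := by
    rw [map_smul, smul_sub ζ⁻¹ (_ - _), inv_smul_smul₀ hζ]
  have hζ' : 0 < ‖ζ‖ := norm_pos_iff.mpr hζ
  rw [h_factor, norm_smul, norm_inv, inv_mul_le_iff₀ hζ']
  refine (norm_add_sub_sub_fderiv_le hf hC hζw).trans_eq ?_
  rw [norm_smul]
  ring

theorem differentiableAt_clm_of_apply {F : Type*} [NormedAddCommGroup F] [NormedSpace ℂ F]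
    {A : E → F →L[ℂ] Y} {u : E} {δ C : ℝ} (hδ : 0 < δ)
    (hA : ∀ w, DifferentiableOn ℂ (fun y => A y w) (ball u δ))
    (hC : ∀ y ∈ ball u δ, ‖A y‖ ≤ C) : DifferentiableAt ℂ A u := by
  have hu : u ∈ ball u δ := mem_ball_self hδ
  have hC₀ : 0 ≤ C := (norm_nonneg _).trans (hC u hu)
  have hAu : ∀ w, DifferentiableAt ℂ (fun y => A y w) u := fun w =>
    (hA w).differentiableAt (isOpen_ball.mem_nhds hu)
  have h_apply : ∀ w, ∀ y ∈ ball u δ, ‖A y w‖ ≤ C * ‖w‖ := fun w y hy =>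
    (A y).le_of_opNorm_le (hC y hy) w
  let B : F →ₗ[ℂ] E →L[ℂ] Y :=
    { toFun := fun w => fderiv ℂ (fun y => A y w) u
      map_add' := fun w₁ w₂ => by
        simp only [map_add]
        exact fderiv_add (hAu w₁) (hAu w₂)
      map_smul' := fun c w => by
        simp only [map_smul, RingHom.id_apply]
        exact fderiv_const_smul (hAu w) c }
  have hB : ∀ w, ‖B w‖ ≤ C / δ * ‖w‖ := fun w =>
    (norm_fderiv_le_div_of_forall_mem_ball_norm_le hδ (hA w) (h_apply w)).trans_eq (by ring)
  refine (hasFDerivAt_of_norm_sub_le_sq (L := (B.mkContinuous _ hB).flip) (C := 3 * C / δ ^ 2) hδ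
    fun v hv => ?_).differentiableAt
  refine ContinuousLinearMap.opNorm_le_bound _ (by positivity) fun w => ?_
  exact (norm_add_sub_sub_fderiv_le (hA w) (h_apply w) hv).trans_eq (by ring)

variable [CompleteSpace Y]

theorem differentiableAt_fderiv_apply {f : E → Y} {U : Set E} (hU : IsOpen U)
    (hf : DifferentiableOn ℂ f U) {u : E} (hu : u ∈ U) (w : E) :
    DifferentiableAt ℂ (fun y => fderiv ℂ f y w) u := by
  obtain ⟨δ, C, hδ, h_sub, hC⟩ := exists_ball_forall_norm_le hU hf.continuousOn hu
  have h_inner : ∀ y ∈ ball u (δ / 2), ball y (δ / 2) ⊆ ball u δ := fun y hy =>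
    ball_subset_ball' (by linarith [mem_ball.mp hy])
  set c : ℝ := δ / 2 / (‖w‖ + 1)
  have hc : 0 < c := by positivity
  have hcw : c * ‖w‖ < δ / 2 := by
    rw [div_mul_eq_mul_div, div_lt_iff₀ (by positivity)]
    nlinarith [norm_nonneg w]
  set ζ : ℕ → ℂ := fun n => (c * (1 / (n + 1)) : ℝ)
  have hζ_norm : ∀ n, ‖ζ n‖ = c * (1 / (n + 1)) := fun n => by
    rw [Complex.norm_real, Real.norm_of_nonneg (by positivity)]
  have hζ : ∀ n, ζ n ≠ 0 := fun n => norm_pos_iff.mp (by rw [hζ_norm]; positivity)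
  have hζw : ∀ n, ‖ζ n • w‖ < δ / 2 := fun n => by
    rw [norm_smul, hζ_norm]
    refine lt_of_le_of_lt ?_ hcw
    gcongr
    exact mul_le_of_le_one_right hc.le (div_le_one_of_le₀ (by linarith [n.cast_nonneg (α := ℝ)])
      (by positivity))
  have hζ_tendsto : Tendsto (fun n => 3 * C / (δ / 2) ^ 2 * ‖w‖ ^ 2 * ‖ζ n‖) atTop (𝓝 0) := by
    simp only [hζ_norm]
    simpa only [mul_zero] using (tendsto_one_div_add_atTop_nhds_zero_nat.const_mul c).const_mul
      (3 * C / (δ / 2) ^ 2 * ‖w‖ ^ 2)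
  refine differentiableAt_of_tendstoUniformlyOn_ball (half_pos hδ)
    (F := fun n y => (ζ n)⁻¹ • (f (y + ζ n • w) - f y)) (l := atTop) (fun n y hy => ?_) ?_
  · have h_diff : ∀ v ∈ ball y (δ / 2), DifferentiableAt ℂ f v := fun v hv =>
      hf.differentiableAt (hU.mem_nhds (h_sub (h_inner y hy hv)))
    have h_shift : DifferentiableAt ℂ f (y + ζ n • w) := h_diff _ (by simpa using hζw n)
    exact (((h_shift.comp y (by fun_prop)).sub
      (h_diff y (mem_ball_self (half_pos hδ)))).const_smul _).differentiableWithinAt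
  · refine Metric.tendstoUniformlyOn_iff.mpr fun η hη => ?_
    filter_upwards [hζ_tendsto.eventually_lt_const hη] with n hn y hy
    rw [dist_comm, dist_eq_norm]
    exact (norm_slope_sub_fderiv_le (hζ n) (hf.mono ((h_inner y hy).trans h_sub))
      (fun z hz => hC z (h_inner y hy hz)) (hζw n)).trans_lt hn

theorem differentiableOn_fderiv {f : E → Y} {U : Set E} (hU : IsOpen U)
    (hf : DifferentiableOn ℂ f U) : DifferentiableOn ℂ (fderiv ℂ f) U := fun u hu => by
  obtain ⟨δ, C, hδ, h_sub, hC⟩ := exists_ball_forall_norm_le hU hf.continuousOn hu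
  have h_half : ball u (δ / 2) ⊆ ball u δ := ball_subset_ball (half_le_self hδ.le)
  exact (differentiableAt_clm_of_apply (half_pos hδ)
    (fun w y hy =>
      (differentiableAt_fderiv_apply hU hf (h_sub (h_half hy)) w).differentiableWithinAt)
    (fun y hy => norm_fderiv_le_div_of_mem_ball (hf.mono h_sub) hC (half_lt_self hδ)
      (ball_subset_closedBall hy))).differentiableWithinAt

set_option maxHeartbeats 400000 in
-- unifying the instances on spaces of linear maps into multilinear maps is slow
theorem differentiableOn_iteratedFDeriv {f : E → Y} {U : Set E} (hU : IsOpen U)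
    (hf : DifferentiableOn ℂ f U) (n : ℕ) : DifferentiableOn ℂ (iteratedFDeriv ℂ n f) U := by
  induction n with
  | zero =>
    rw [iteratedFDeriv_zero_eq_comp]
    exact (continuousMultilinearCurryFin0 ℂ E Y).symm.comp_differentiableOn_iff.mpr hf
  | succ n ih =>
    rw [iteratedFDeriv_succ_eq_comp_left]
    exact (continuousMultilinearCurryLeftEquiv ℂ (fun _ : Fin (n + 1) => E)
      Y).symm.differentiable.comp_differentiableOn (differentiableOn_fderiv hU ih)

theorem norm_iteratedFDeriv_le_div_pow {f : E → Y} {x : E} {ρ C d : ℝ} (hd : 0 < d)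
    (hf : DifferentiableOn ℂ f (ball x ρ)) (hC : ∀ y ∈ ball x ρ, ‖f y‖ ≤ C) (n : ℕ) :
    ∀ y ∈ ball x (ρ - n * d), ‖iteratedFDeriv ℂ n f y‖ ≤ C / d ^ n := by
  induction n with
  | zero => simpa using hC
  | succ n ih =>
    intro y hy
    have h_sub : ball y d ⊆ ball x (ρ - n * d) := ball_subset_ball' (by
      have := mem_ball.mp hy
      push_cast at this
      linarith)
    have h_sub' : ball x (ρ - n * d) ⊆ ball x ρ :=
      ball_subset_ball (sub_le_self ρ (by positivity))
    rw [← norm_fderiv_iteratedFDeriv, pow_succ, ← div_div]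
    exact norm_fderiv_le_div_of_forall_mem_ball_norm_le hd
      ((differentiableOn_iteratedFDeriv isOpen_ball hf n).mono (h_sub.trans h_sub'))
      fun z hz => ih z (h_sub hz)

theorem iteratedDeriv_comp_line {f : E → Y} {U : Set E} (hU : IsOpen U)
    (hf : DifferentiableOn ℂ f U) (x y : E) (n : ℕ) {z : ℂ} (hz : x + z • y ∈ U) :
    iteratedDeriv n (fun z : ℂ => f (x + z • y)) z
      = iteratedFDeriv ℂ n f (x + z • y) fun _ => y := by
  induction n generalizing z with
  | zero => simp only [iteratedDeriv_zero, iteratedFDeriv_zero_apply]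
  | succ n ih =>
    have h_open : IsOpen {z : ℂ | x + z • y ∈ U} := hU.preimage (by fun_prop)
    have h_eq : iteratedDeriv n (fun z : ℂ => f (x + z • y)) =ᶠ[𝓝 z]
        fun z => iteratedFDeriv ℂ n f (x + z • y) fun _ => y := by
      filter_upwards [h_open.mem_nhds hz] with z' hz' using ih hz'
    have h_line := hasDerivAt_comp_line
      ((differentiableOn_iteratedFDeriv hU hf n).differentiableAt (hU.mem_nhds hz))
    let eval := ContinuousMultilinearMap.apply ℂ (fun _ : Fin n => E) Y fun _ => y
    rw [iteratedDeriv_succ, h_eq.deriv_eq]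
    exact (eval.hasFDerivAt.comp_hasDerivAt z h_line).deriv

theorem norm_inv_factorial_smul_iteratedFDeriv_mul_pow_le {f : E → Y} {x : E} {ρ C : ℝ}
    (hρ : 0 < ρ) (hf : DifferentiableOn ℂ f (ball x ρ)) (hC : ∀ y ∈ ball x ρ, ‖f y‖ ≤ C) (n : ℕ) :
    ‖(n.factorial : ℂ)⁻¹ • iteratedFDeriv ℂ n f x‖ * (ρ / Real.exp 1) ^ n
      ≤ C * Real.exp 1 := by
  have hC₀ : 0 ≤ C := (norm_nonneg _).trans (hC x (mem_ball_self hρ))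
  have h_cauchy : ‖iteratedFDeriv ℂ n f x‖ ≤ C / (ρ / (n + 1)) ^ n := by
    refine norm_iteratedFDeriv_le_div_pow (by positivity) hf hC n x (mem_ball_self ?_)
    rw [sub_pos, mul_div_assoc', div_lt_iff₀ (by positivity)]
    linarith
  have h_exp : ((n : ℝ) + 1) ^ n / n.factorial ≤ Real.exp 1 ^ n * Real.exp 1 := by
    refine (Real.pow_div_factorial_le_exp _ (by positivity) n).trans_eq ?_
    rw [Real.exp_add, ← Real.exp_nat_mul, mul_one]
  rw [norm_smul, norm_inv, Complex.norm_natCast]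
  calc (n.factorial : ℝ)⁻¹ * ‖iteratedFDeriv ℂ n f x‖ * (ρ / Real.exp 1) ^ n
      ≤ (n.factorial : ℝ)⁻¹ * (C / (ρ / (n + 1)) ^ n) * (ρ / Real.exp 1) ^ n := by gcongr
    _ = C * (((n : ℝ) + 1) ^ n / n.factorial) / Real.exp 1 ^ n := by
        simp only [div_pow]; field_simp
    _ ≤ C * (Real.exp 1 ^ n * Real.exp 1) / Real.exp 1 ^ n := by gcongr
    _ = C * Real.exp 1 := by field_simp

theorem analyticOnNhd_of_differentiableOn {f : E → Y} {U : Set E} (hU : IsOpen U)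
    (hf : DifferentiableOn ℂ f U) : AnalyticOnNhd ℂ f U := fun x hx => by
  obtain ⟨ρ, C, hρ, h_sub, hC⟩ := exists_ball_forall_norm_le hU hf.continuousOn hx
  replace hf := hf.mono h_sub
  let r : NNReal := ⟨ρ / Real.exp 1, by positivity⟩
  let P : FormalMultilinearSeries ℂ E Y := fun n =>
    (n.factorial : ℂ)⁻¹ • iteratedFDeriv ℂ n f x
  refine ⟨P, r, P.le_radius_of_bound _
    (norm_inv_factorial_smul_iteratedFDeriv_mul_pow_le hρ hf hC), ?_, fun {y} hy => ?_⟩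
  · exact ENNReal.coe_pos.mpr (NNReal.coe_pos.mp (by positivity : 0 < ρ / Real.exp 1))
  · have hy' : ‖y‖ < ρ / Real.exp 1 := by rwa [eball_coe, mem_ball_zero_iff] at hy
    have h_mem : ∀ z ∈ ball (0 : ℂ) (Real.exp 1), x + z • y ∈ ball x ρ := fun z hz => by
      rw [mem_ball_iff_norm, add_sub_cancel_left, norm_smul]
      calc ‖z‖ * ‖y‖ ≤ Real.exp 1 * ‖y‖ := by gcongr; exact (mem_ball_zero_iff.mp hz).le
        _ < Real.exp 1 * (ρ / Real.exp 1) := by gcongr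
        _ = ρ := by field_simp
    have h_sum := Complex.hasSum_taylorSeries_on_ball
      (differentiableOn_comp_line isOpen_ball hf h_mem) (z := 1) (by simp)
    simp only [one_smul, sub_zero, one_pow] at h_sum
    convert h_sum using 2 with n
    rw [iteratedDeriv_comp_line isOpen_ball hf x y n (by simpa using hρ), zero_smul, add_zero]
    rfl

end Analyticity

section JointSmoothness

theorem norm_sub_le_mul_abs_of_hasDerivAt {Y : Type*} [NormedAddCommGroup Y] [NormedSpace ℝ Y]
    {a a' : ℝ → Y} {C : ℝ} (ha : ∀ t, HasDerivAt a (a' t) t) (hC : ∀ t, ‖a' t‖ ≤ C) (x y : ℝ) :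
    ‖a y - a x‖ ≤ C * |y - x| :=
  convex_univ.norm_image_sub_le_of_norm_hasDerivWithin_le
    (fun t _ => (ha t).hasDerivWithinAt) (fun t _ => hC t) (mem_univ x) (mem_univ y)

theorem norm_sub_sub_smul_le_mul_sq_of_hasDerivAt {Y : Type*} [NormedAddCommGroup Y]
    [NormedSpace ℝ Y] {a a' a'' : ℝ → Y} {C : ℝ} (ha : ∀ t, HasDerivAt a (a' t) t)
    (ha' : ∀ t, HasDerivAt a' (a'' t) t) (hC : ∀ t, ‖a'' t‖ ≤ C) (x y : ℝ) :
    ‖a y - a x - (y - x) • a' x‖ ≤ C * |y - x| ^ 2 := by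
  have h_deriv : ∀ t, HasDerivAt (fun t => a t - (t - x) • a' x) (a' t - a' x) t := fun t => by
    simpa only [one_smul] using
      (ha t).fun_sub (((hasDerivAt_id' t).sub_const x).smul_const (a' x))
  have h_bound : ∀ t ∈ uIcc x y, ‖a' t - a' x‖ ≤ C * |y - x| := fun t ht => by
    refine (norm_sub_le_mul_abs_of_hasDerivAt ha' hC x t).trans ?_
    exact mul_le_mul_of_nonneg_left (abs_sub_left_of_mem_uIcc ht) ((norm_nonneg _).trans (hC 0))
  have h_mvt := (convex_uIcc x y).norm_image_sub_le_of_norm_hasDerivWithin_le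
    (fun t _ => (h_deriv t).hasDerivWithinAt) h_bound left_mem_uIcc right_mem_uIcc
  rw [sub_self, zero_smul, sub_zero, Real.norm_eq_abs] at h_mvt
  convert h_mvt using 1
  · rw [sub_right_comm]
  · ring

theorem contDiffOn_succ_uncurry_of_partial {𝕜 E F Y : Type*} [RCLike 𝕜]
    [NormedAddCommGroup E] [NormedSpace 𝕜 E] [NormedAddCommGroup F] [NormedSpace 𝕜 F]
    [NormedAddCommGroup Y] [NormedSpace 𝕜 Y] {f : E → F → Y} {f₁ : E → F → E →L[𝕜] Y}
    {f₂ : E → F → F →L[𝕜] Y} {W : Set (E × F)} {n : ℕ} (hW : IsOpen W)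
    (h₁ : ∀ q ∈ W, HasFDerivAt (f · q.2) (f₁ q.1 q.2) q.1)
    (h₂ : ∀ q ∈ W, HasFDerivAt (f q.1) (f₂ q.1 q.2) q.2)
    (hf₁ : ContDiffOn 𝕜 n (Function.uncurry f₁) W) (hf₂ : ContDiffOn 𝕜 n (Function.uncurry f₂) W) :
    ContDiffOn 𝕜 (n + 1) (Function.uncurry f) W := by
  rw [contDiffOn_succ_iff_hasFDerivWithinAt_of_uniqueDiffOn hW.uniqueDiffOn]
  refine ⟨fun h => absurd h (by simp), fun q => (f₁ q.1 q.2).coprod (f₂ q.1 q.2), ?_,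
    fun q hq => ?_⟩
  · exact (ContinuousLinearMap.coprodEquivL 𝕜 (E := E) (F := F) (G := Y)).contDiff.comp_contDiffOn
      (hf₁.prodMk hf₂)
  · have h_nhds := hW.mem_nhds hq
    exact (hasStrictFDerivAt_uncurry_coprod (mem_of_superset h_nhds h₁)
      (mem_of_superset h_nhds h₂) (hf₁.continuousOn.continuousAt h_nhds)
      (hf₂.continuousOn.continuousAt h_nhds)).hasFDerivAt.hasFDerivWithinAt

/-- `g 0, …, g m` are the successive derivatives in the real variable `θ` of the family `g 0 θ`,
each of them holomorphic on `U` and bounded by `C`. Packaging all orders together lets one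
differentiate in `u` without ever commuting iterated derivatives. -/
structure HolomorphicTower {E Y : Type*} [NormedAddCommGroup E] [NormedSpace ℂ E]
    [NormedAddCommGroup Y] [NormedSpace ℂ Y] (m : ℕ) (g : ℕ → ℝ → E → Y) (U : Set E) (C : ℝ) :
    Prop where
  hasDerivAt : ∀ ν < m, ∀ θ, ∀ u ∈ U, HasDerivAt (g ν · u) (g (ν + 1) θ u) θ
  continuous : ∀ u ∈ U, Continuous (g m · u)
  differentiableOn : ∀ ν ≤ m, ∀ θ, DifferentiableOn ℂ (g ν θ) U
  norm_le : ∀ ν ≤ m, ∀ θ, ∀ u ∈ U, ‖g ν θ u‖ ≤ C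

namespace HolomorphicTower

variable {E Y : Type*} [NormedAddCommGroup E] [NormedSpace ℂ E]
  [NormedAddCommGroup Y] [NormedSpace ℂ Y] {m : ℕ} {g : ℕ → ℝ → E → Y} {U V : Set E} {C δ : ℝ}

theorem mono (h : HolomorphicTower m g U C) (hVU : V ⊆ U) : HolomorphicTower m g V C where
  hasDerivAt ν hν θ u hu := h.hasDerivAt ν hν θ u (hVU hu)
  continuous u hu := h.continuous u (hVU hu)
  differentiableOn ν hν θ := (h.differentiableOn ν hν θ).mono hVU
  norm_le ν hν θ u hu := h.norm_le ν hν θ u (hVU hu)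

theorem succ (h : HolomorphicTower (m + 1) g U C) :
    HolomorphicTower m (fun ν => g (ν + 1)) U C where
  hasDerivAt ν hν := h.hasDerivAt (ν + 1) (by omega)
  continuous := h.continuous
  differentiableOn ν hν := h.differentiableOn (ν + 1) (by omega)
  norm_le ν hν := h.norm_le (ν + 1) (by omega)

theorem differentiableAt (h : HolomorphicTower m g U C) (hU : IsOpen U) {ν : ℕ} (hν : ν ≤ m)
    (θ : ℝ) {u : E} (hu : u ∈ U) : DifferentiableAt ℂ (g ν θ) u :=
  (h.differentiableOn ν hν θ).differentiableAt (hU.mem_nhds hu)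

theorem norm_fderiv_sub_fderiv_le (h : HolomorphicTower m g U C) {ν : ℕ} (hν : ν < m) {u : E}
    (hδ : 0 < δ) (hu : ball u δ ⊆ U) (x y : ℝ) :
    ‖fderiv ℂ (g ν y) u - fderiv ℂ (g ν x) u‖ ≤ C / δ * |y - x| := by
  replace h := h.mono hu
  have hu' : u ∈ ball u δ := mem_ball_self hδ
  rw [← fderiv_sub (h.differentiableAt isOpen_ball hν.le y hu')
    (h.differentiableAt isOpen_ball hν.le x hu')]
  refine (norm_fderiv_le_div_of_forall_mem_ball_norm_le (C := C * |y - x|) hδ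
    ((h.differentiableOn ν hν.le y).sub (h.differentiableOn ν hν.le x))
    fun v hv => ?_).trans_eq (by ring)
  exact norm_sub_le_mul_abs_of_hasDerivAt (fun t => h.hasDerivAt ν hν t v hv)
    (fun t => h.norm_le (ν + 1) hν t v hv) x y

theorem norm_fderiv_sub_sub_smul_le (h : HolomorphicTower m g U C) {ν : ℕ} (hν : ν + 1 < m)
    {u : E} (hδ : 0 < δ) (hu : ball u δ ⊆ U) (x y : ℝ) :
    ‖fderiv ℂ (g ν y) u - fderiv ℂ (g ν x) u - (y - x) • fderiv ℂ (g (ν + 1) x) u‖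
      ≤ C / δ * |y - x| ^ 2 := by
  replace h := h.mono hu
  have hu' : u ∈ ball u δ := mem_ball_self hδ
  have hy := h.differentiableAt isOpen_ball (by omega : ν ≤ m) y hu'
  have hx := h.differentiableAt isOpen_ball (by omega : ν ≤ m) x hu'
  have hx' := h.differentiableAt isOpen_ball hν.le x hu'
  rw [← Complex.coe_smul, ← fderiv_const_smul hx', ← fderiv_sub hy hx,
    ← fderiv_sub (hy.sub hx) (hx'.const_smul _)]
  refine (norm_fderiv_le_div_of_forall_mem_ball_norm_le (C := C * |y - x| ^ 2) hδ
    (((h.differentiableOn ν (by omega) y).sub (h.differentiableOn ν (by omega) x)).sub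
      ((h.differentiableOn (ν + 1) hν.le x).const_smul _)) fun v hv => ?_).trans_eq (by ring)
  exact norm_sub_sub_smul_le_mul_sq_of_hasDerivAt (fun t => h.hasDerivAt ν (by omega) t v hv)
    (fun t => h.hasDerivAt (ν + 1) hν t v hv) (fun t => h.norm_le (ν + 2) hν t v hv) x y

protected theorem fderiv [CompleteSpace Y] (h : HolomorphicTower (m + 1) g U C) (hU : IsOpen U)
    (hδ : 0 < δ) (hV : ∀ u ∈ V, ball u δ ⊆ U) :
    HolomorphicTower m (fun ν θ u => fderiv ℂ (g ν θ) u) V (C / δ) where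
  hasDerivAt ν hν θ u hu := by
    rw [hasDerivAt_iff_isLittleO]
    have h_quad : (fun y : ℝ => |y - θ| ^ 2) =o[𝓝 θ] fun y => y - θ := by
      exact (Asymptotics.isLittleO_norm_pow_id one_lt_two).comp_tendsto
        (tendsto_sub_nhds_zero_iff.mpr tendsto_id)
    refine (Asymptotics.IsBigO.of_bound (C / δ) (.of_forall fun y => ?_)).trans_isLittleO h_quad
    simpa using h.norm_fderiv_sub_sub_smul_le (by omega) hδ (hV u hu) θ y
  continuous u hu := by
    have hC : 0 ≤ C := (norm_nonneg _).trans
      (h.norm_le 0 (by omega) 0 u (hV u hu (mem_ball_self hδ)))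
    refine (LipschitzWith.of_dist_le_mul (K := ⟨C / δ, by positivity⟩) fun x y => ?_).continuous
    rw [dist_eq_norm, Real.dist_eq]
    exact h.norm_fderiv_sub_fderiv_le m.lt_succ_self hδ (hV u hu) y x
  differentiableOn ν hν θ := (differentiableOn_fderiv hU (h.differentiableOn ν (by omega) θ)).mono
    fun u hu => hV u hu (mem_ball_self hδ)
  norm_le ν hν θ u hu := norm_fderiv_le_div_of_forall_mem_ball_norm_le hδ
    ((h.differentiableOn ν (by omega) θ).mono (hV u hu))
    fun v hv => h.norm_le ν (by omega) θ v (hV u hu hv)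

theorem continuousOn_uncurry (h : HolomorphicTower 0 g U C) (hU : IsOpen U) :
    ContinuousOn (Function.uncurry (g 0)) (univ ×ˢ U) := fun q hq => by
  obtain ⟨δ, hδ, h_sub⟩ := Metric.isOpen_iff.mp hU q.2 hq.2
  replace h := h.mono h_sub
  have hC : 0 ≤ C := (norm_nonneg _).trans (h.norm_le 0 le_rfl 0 _ (mem_ball_self hδ))
  have h_lip : ∀ θ ∈ (univ : Set ℝ),
      LipschitzOnWith ⟨C / (δ - δ / 2), div_nonneg hC (by linarith)⟩ (g 0 θ)
        (closedBall q.2 (δ / 2)) :=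
    fun θ _ => LipschitzOnWith.of_dist_le_mul fun x hx y hy => by
      rw [dist_eq_norm, dist_eq_norm]
      exact norm_sub_le_of_forall_mem_ball_norm_le (h.differentiableOn 0 le_rfl θ)
        (h.norm_le 0 le_rfl θ) (half_lt_self hδ) hx hy
  have h_cont := continuousOn_prod_of_continuousOn_lipschitzOnWith' (Function.uncurry (g 0)) _
    h_lip fun u hu => (h.continuous u (closedBall_subset_ball (half_lt_self hδ) hu)).continuousOn
  exact (h_cont.continuousAt (prod_mem_nhds univ_mem
    (closedBall_mem_nhds _ (half_pos hδ)))).continuousWithinAt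

end HolomorphicTower

theorem HolomorphicTower.contDiffOn_uncurry {E Y : Type u} [NormedAddCommGroup E] [NormedSpace ℂ E]
    [NormedAddCommGroup Y] [NormedSpace ℂ Y] [CompleteSpace Y] {m : ℕ} {g : ℕ → ℝ → E → Y}
    {U : Set E} {C : ℝ} (h : HolomorphicTower m g U C) (hU : IsOpen U) :
    ContDiffOn ℝ m (Function.uncurry (g 0)) (univ ×ˢ U) := by
  induction m generalizing Y U C with
  | zero => exact contDiffOn_zero.mpr (h.continuousOn_uncurry hU)
  | succ m ih =>
    rintro ⟨θ₀, u₀⟩ ⟨-, hu₀⟩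
    obtain ⟨δ, hδ, h_sub⟩ := Metric.isOpen_iff.mp hU u₀ hu₀
    have h_half : ball u₀ (δ / 2) ⊆ U := (ball_subset_ball (half_le_self hδ.le)).trans h_sub
    have h_near : ∀ u ∈ ball u₀ (δ / 2), ball u (δ / 2) ⊆ U := fun u hu =>
      (ball_subset_ball' (by linarith [mem_ball.mp hu])).trans h_sub
    have h_fderiv := ih (h.fderiv hU (half_pos hδ) h_near) isOpen_ball
    have h_deriv := ih (h.succ.mono h_half) isOpen_ball
    have h_succ := contDiffOn_succ_uncurry_of_partial (f := g 0)
      (f₁ := fun θ u => ContinuousLinearMap.toSpanSingleton ℝ (g 1 θ u))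
      (f₂ := fun θ u => (fderiv ℂ (g 0 θ) u).restrictScalars ℝ)
      (isOpen_univ.prod isOpen_ball)
      (fun q hq => (h.hasDerivAt 0 m.succ_pos q.1 q.2 (h_half hq.2)).hasFDerivAt)
      (fun q hq => (h.differentiableAt hU m.succ.zero_le q.1
        (h_half hq.2)).hasFDerivAt.restrictScalars ℝ)
      ((ContinuousLinearMap.toSpanSingletonCLE (𝕜 := ℝ) (E := Y)).contDiff.comp_contDiffOn h_deriv)
      ((ContinuousLinearMap.restrictScalarsL ℂ E Y ℝ ℝ).contDiff.comp_contDiffOn h_fderiv)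
    have h_nhds : univ ×ˢ ball u₀ (δ / 2) ∈ 𝓝 (θ₀, u₀) :=
      prod_mem_nhds univ_mem (ball_mem_nhds _ (half_pos hδ))
    exact_mod_cast (h_succ.contDiffAt h_nhds).contDiffWithinAt

theorem HolomorphicTower.of_contDiff {E Y : Type*} [NormedAddCommGroup E] [NormedSpace ℂ E]
    [NormedAddCommGroup Y] [NormedSpace ℂ Y] {m : ℕ} {f : ℝ → E → Y} {U : Set E} {C : ℝ}
    (hf : ∀ u ∈ U, ContDiff ℝ m (f · u))
    (h_diff : ∀ ν ≤ m, ∀ θ, DifferentiableOn ℂ (fun u => iteratedDeriv ν (f · u) θ) U)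
    (hC : ∀ ν ≤ m, ∀ θ, ∀ u ∈ U, ‖iteratedDeriv ν (f · u) θ‖ ≤ C) :
    HolomorphicTower m (fun ν θ u => iteratedDeriv ν (f · u) θ) U C where
  hasDerivAt ν hν θ u hu := by
    simp only [iteratedDeriv_succ]
    exact ((hf u hu).differentiable_iteratedDeriv ν (by exact_mod_cast hν) θ).hasDerivAt
  continuous u hu := (hf u hu).continuous_iteratedDeriv m le_rfl
  differentiableOn := h_diff
  norm_le := hC

end JointSmoothness

section ParametricIntegral

variable {E Y : Type*} [NormedAddCommGroup E] [NormedSpace ℂ E]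
  [NormedAddCommGroup Y] [NormedSpace ℂ Y]

theorem hasFDerivAt_intervalIntegral_of_differentiableOn {h : ℝ → E → Y} {U : Set E} {a b C : ℝ}
    (hU : IsOpen U) (h_diff : ∀ t ∈ uIcc a b, DifferentiableOn ℂ (h t) U)
    (h_cont : ∀ u ∈ U, ContinuousOn (h · u) (uIcc a b))
    (h_fderiv : ∀ u ∈ U, ContinuousOn (fun t => fderiv ℂ (h t) u) (uIcc a b))
    (hC : ∀ t ∈ uIcc a b, ∀ u ∈ U, ‖h t u‖ ≤ C) {u : E} (hu : u ∈ U) :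
    HasFDerivAt (fun v => ∫ t in a..b, h t v) (∫ t in a..b, fderiv ℂ (h t) u) u := by
  obtain ⟨δ, hδ, h_sub⟩ := Metric.isOpen_iff.mp hU u hu
  have h_half : ball u (δ / 2) ⊆ U := (ball_subset_ball (half_le_self hδ.le)).trans h_sub
  refine intervalIntegral.hasFDerivAt_integral_of_dominated_of_fderiv_le
    (F := fun v t => h t v) (F' := fun v t => fderiv ℂ (h t) v)
    (bound := fun _ => C / (δ - δ / 2)) (ball_mem_nhds u (half_pos hδ)) ?_
    (h_cont u hu).intervalIntegrable
    (((h_fderiv u hu).mono uIoc_subset_uIcc).aestronglyMeasurable measurableSet_uIoc)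
    (.of_forall fun t ht v hv => ?_) intervalIntegrable_const (.of_forall fun t ht v hv => ?_)
  · filter_upwards [hU.mem_nhds hu] with v hv
    exact ((h_cont v hv).mono uIoc_subset_uIcc).aestronglyMeasurable measurableSet_uIoc
  · exact norm_fderiv_le_div_of_mem_ball ((h_diff t (uIoc_subset_uIcc ht)).mono h_sub)
      (fun y hy => hC t (uIoc_subset_uIcc ht) y (h_sub hy)) (half_lt_self hδ)
      (ball_subset_closedBall hv)
  · exact ((h_diff t (uIoc_subset_uIcc ht)).differentiableAt
      (hU.mem_nhds (h_half hv))).hasFDerivAt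

theorem differentiableOn_uncurry_iteratedDeriv [CompleteSpace Y] {G : ℂ → E → Y} {W : Set (ℂ × E)}
    (hW : IsOpen W) (hG : DifferentiableOn ℂ (Function.uncurry G) W) (ν : ℕ) :
    DifferentiableOn ℂ (fun q : ℂ × E => iteratedDeriv ν (G · q.2) q.1) W := by
  induction ν with
  | zero =>
    simp only [iteratedDeriv_zero]
    exact hG
  | succ ν ih =>
    have h_apply : DifferentiableOn ℂ
        (fun q => fderiv ℂ (fun q : ℂ × E => iteratedDeriv ν (G · q.2) q.1) q (1, 0)) W :=
      (differentiableOn_fderiv hW ih).clm_apply (differentiableOn_const _)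
    refine h_apply.congr fun q hq => ?_
    have h_line : HasDerivAt (fun s : ℂ => (s, q.2)) (1, 0) q.1 :=
      (hasDerivAt_id q.1).prodMk (hasDerivAt_const q.1 q.2)
    rw [iteratedDeriv_succ]
    exact ((ih.differentiableAt (hW.mem_nhds hq)).hasFDerivAt.comp_hasDerivAt q.1 h_line).deriv

theorem ofReal_mul_mem_ball {t : ℝ} (ht : t ∈ uIcc (0 : ℝ) 1) {s : ℂ} (hs : s ∈ ball 0 1) :
    (t : ℂ) * s ∈ ball 0 1 := by
  rw [uIcc_of_le zero_le_one] at ht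
  refine balanced_ball_zero.smul_mem (a := (t : ℂ)) ?_ hs
  rw [Complex.norm_real, Real.norm_of_nonneg ht.1]
  exact ht.2

theorem differentiableOn_uncurry_integral_comp_mul [CompleteSpace Y] {G : ℂ → E → Y} {U : Set E}
    {C : ℝ} (hU : IsOpen U) (hG : DifferentiableOn ℂ (Function.uncurry G) (ball 0 1 ×ˢ U))
    (hC : ∀ s ∈ ball (0 : ℂ) 1, ∀ u ∈ U, ‖G s u‖ ≤ C) :
    DifferentiableOn ℂ (fun q : ℂ × E => ∫ t in (0 : ℝ)..1, G (t * q.1) q.2)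
      (ball 0 1 ×ˢ U) := by
  have hW : IsOpen (ball (0 : ℂ) 1 ×ˢ U) := isOpen_ball.prod hU
  let dilation : ℝ → ℂ × E →L[ℂ] ℂ × E := fun t =>
    ContinuousLinearMap.prodMapL ℂ ℂ ℂ E E ((t : ℂ) • .id ℂ ℂ, .id ℂ E)
  have h_maps : ∀ t ∈ uIcc (0 : ℝ) 1, MapsTo (dilation t) (ball 0 1 ×ˢ U) (ball 0 1 ×ˢ U) :=
    fun t ht q hq => ⟨ofReal_mul_mem_ball ht hq.1, hq.2⟩
  have h_dilation : Continuous dilation := by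
    simp only [dilation]
    fun_prop
  have h_fderiv : ∀ q ∈ ball (0 : ℂ) 1 ×ˢ U, ∀ t ∈ uIcc (0 : ℝ) 1,
      HasFDerivAt (fun q : ℂ × E => G (t * q.1) q.2)
        ((fderiv ℂ (Function.uncurry G) (dilation t q)).comp (dilation t)) q := fun q hq t ht =>
    (hG.differentiableAt (hW.mem_nhds (h_maps t ht hq))).hasFDerivAt.comp q
      (dilation t).hasFDerivAt
  have h_orbit : ∀ q, Continuous fun t => dilation t q := fun q => h_dilation.clm_apply
    continuous_const
  refine fun q hq => (hasFDerivAt_intervalIntegral_of_differentiableOn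
    (h := fun t (q : ℂ × E) => G (t * q.1) q.2) hW
    (fun t ht q hq => (h_fderiv q hq t ht).differentiableAt.differentiableWithinAt)
    (fun q hq => hG.continuousOn.comp (h_orbit q).continuousOn fun t ht => h_maps t ht hq)
    (fun q hq => ?_) (fun t ht q hq => hC _ (h_maps t ht hq).1 _ hq.2)
    hq).differentiableAt.differentiableWithinAt
  refine ContinuousOn.congr ?_ fun t ht => (h_fderiv q hq t ht).fderiv
  exact ((differentiableOn_fderiv hW hG).continuousOn.comp (h_orbit q).continuousOn
    fun t ht => h_maps t ht hq).clm_comp h_dilation.continuousOn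

end ParametricIntegral

section Jets

variable {Y : Type*} [NormedAddCommGroup Y]

theorem norm_sub_taylorWithinEval_univ_le [NormedSpace ℝ Y] {m : ℕ} {g : ℝ → Y} {C : ℝ}
    (hg : ContDiff ℝ m g) (hC : ∀ t, ‖iteratedDeriv m g t‖ ≤ C) (x₀ x : ℝ) :
    ‖g x - taylorWithinEval g m univ x₀ x‖ ≤ 2 * C * |x - x₀| ^ m := by
  induction m generalizing g x with
  | zero =>
    simp only [iteratedDeriv_zero] at hC
    rw [taylor_within_zero_eval, pow_zero, mul_one]
    linarith [norm_sub_le (g x) (g x₀), hC x, hC x₀]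
  | succ m ih =>
    have hC₀ : 0 ≤ C := (norm_nonneg _).trans (hC 0)
    obtain ⟨h_diff, -, h_deriv⟩ := contDiff_succ_iff_deriv.mp
      (show ContDiff ℝ ((m : WithTop ℕ∞) + 1) g by exact_mod_cast hg)
    have h_rem : ∀ t, HasDerivAt (fun t => g t - taylorWithinEval g (m + 1) univ x₀ t)
        (deriv g t - taylorWithinEval (deriv g) m univ x₀ t) t := fun t => by
      have h_taylor := hasDerivAt_taylorWithinEval_succ (x₀ := x₀) (x := t) (s := univ) g m
      rw [derivWithin_univ] at h_taylor
      exact (h_diff t).hasDerivAt.sub h_taylor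
    have h_bound : ∀ t ∈ uIcc x₀ x, ‖deriv g t - taylorWithinEval (deriv g) m univ x₀ t‖
        ≤ 2 * C * |x - x₀| ^ m := fun t ht => by
      refine (ih h_deriv (fun t => ?_) t).trans ?_
      · simpa only [← iteratedDeriv_succ'] using hC t
      · have := abs_sub_left_of_mem_uIcc ht
        gcongr
    have h_mvt := (convex_uIcc x₀ x).norm_image_sub_le_of_norm_hasDerivWithin_le
      (fun t _ => (h_rem t).hasDerivWithinAt) h_bound left_mem_uIcc right_mem_uIcc
    rw [taylorWithinEval_self, sub_self, sub_zero, Real.norm_eq_abs] at h_mvt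
    exact h_mvt.trans_eq (by ring)

variable [NormedSpace ℂ Y] {m : ℕ}

/-- The polynomial `∑_{j ≤ m} a_j s^j / j!` whose derivatives at `0` are `a_0, …, a_m`. The variable
is complex, so that the Taylor polynomial of a function of a real variable can be evaluated on a
complex disc. -/
noncomputable def jetPolynomial (m : ℕ) (a : ℕ → Y) (s : ℂ) : Y :=
  ∑ j ∈ Finset.range (m + 1), (s ^ j / j.factorial) • a j

theorem jetPolynomial_succ (a : ℕ → Y) (s : ℂ) :
    jetPolynomial (m + 1) a s
      = jetPolynomial m a s + (s ^ (m + 1) / (m + 1).factorial) • a (m + 1) :=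
  Finset.sum_range_succ _ _

theorem jetPolynomial_sub (a b : ℕ → Y) (s : ℂ) :
    jetPolynomial m a s - jetPolynomial m b s = jetPolynomial m (fun j => a j - b j) s := by
  simp only [jetPolynomial, smul_sub, Finset.sum_sub_distrib]

theorem jetPolynomial_congr {a b : ℕ → Y} (h : ∀ j ≤ m, a j = b j) :
    jetPolynomial m a = jetPolynomial m b :=
  funext fun _ => Finset.sum_congr rfl fun j hj => by
    rw [h j (Nat.lt_succ_iff.mp (Finset.mem_range.mp hj))]

theorem jetPolynomial_iteratedDeriv_ofReal (g : ℝ → Y) (θ s : ℝ) :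
    jetPolynomial m (fun j => iteratedDeriv j g θ) s = taylorWithinEval g m univ θ (θ + s) := by
  rw [taylor_within_apply]
  refine Finset.sum_congr rfl fun j _ => ?_
  rw [iteratedDerivWithin_univ, add_sub_cancel_left, ← Complex.coe_smul]
  push_cast
  rw [div_eq_inv_mul]

theorem isBigO_pow_div_factorial_smul (j : ℕ) (y : Y) :
    (fun s : ℝ => ((s : ℂ) ^ j / j.factorial) • y) =O[𝓝 0] fun s => s ^ j := by
  refine .of_bound (‖y‖ / j.factorial) (.of_forall fun s => le_of_eq ?_)
  rw [norm_smul, norm_div, norm_pow, norm_pow, Complex.norm_real, Complex.norm_natCast]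
  ring

theorem eq_zero_of_jetPolynomial_isLittleO {a : ℕ → Y}
    (h : (fun s : ℝ => jetPolynomial m a s) =o[𝓝 0] fun s => s ^ m) {j : ℕ} (hj : j ≤ m) :
    a j = 0 := by
  induction m generalizing j with
  | zero =>
    obtain rfl : j = 0 := by omega
    simpa [jetPolynomial] using h
  | succ m ih =>
    have h_pow : (fun s : ℝ => s ^ (m + 1)) =o[𝓝 0] fun s => s ^ m :=
      Asymptotics.isLittleO_pow_pow m.lt_succ_self
    have h_lower : (fun s : ℝ => jetPolynomial m a s) =o[𝓝 0] fun s => s ^ m := by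
      simpa only [jetPolynomial_succ, add_sub_cancel_right] using
        (h.trans h_pow).sub ((isBigO_pow_div_factorial_smul (m + 1) (a (m + 1))).trans_isLittleO
          h_pow)
    rcases hj.lt_or_eq with hj | rfl
    · exact ih h_lower (Nat.lt_succ_iff.mp hj)
    · have h_vanish : ∀ s, jetPolynomial m a s = 0 := fun s =>
        Finset.sum_eq_zero fun j hj => by
          rw [ih h_lower (Nat.lt_succ_iff.mp (Finset.mem_range.mp hj)), smul_zero]
      simp only [jetPolynomial_succ, h_vanish, zero_add] at h
      have h_lim := (h.mono nhdsWithin_le_nhds).tendsto_inv_smul_nhds_zero (l := 𝓝[≠] 0)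
      have h_const : Tendsto (fun _ : ℝ => (1 / (m + 1).factorial : ℂ) • a (m + 1)) (𝓝[≠] 0)
          (𝓝 0) := by
        refine h_lim.congr' ?_
        filter_upwards [self_mem_nhdsWithin] with s hs
        have hs' : (s : ℂ) ≠ 0 := Complex.ofReal_ne_zero.mpr hs
        rw [← Complex.coe_smul, smul_smul]
        push_cast
        rw [← mul_div_assoc, inv_mul_cancel₀ (pow_ne_zero _ hs')]
      simpa [Nat.factorial_ne_zero] using tendsto_nhds_unique tendsto_const_nhds h_const

end Jets

section JetRemainder

variable {Y : Type*} [NormedAddCommGroup Y] [NormedSpace ℂ Y] [CompleteSpace Y] {H : ℂ → Y}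
  {B : ℝ} {m : ℕ}

theorem norm_iteratedDeriv_zero_le_factorial_mul (hH : DifferentiableOn ℂ H (ball 0 1))
    (hB : ∀ s ∈ ball (0 : ℂ) 1, ‖H s‖ ≤ B) (j : ℕ) : ‖iteratedDeriv j H 0‖ ≤ j.factorial * B := by
  have on_smaller_disc : ∀ d ∈ Ioo (0 : ℝ) 1, ‖iteratedDeriv j H 0‖ ≤ j.factorial * B / d ^ j :=
    fun d hd => Complex.norm_iteratedDeriv_le_of_forall_mem_sphere_norm_le j hd.1
      (hH.diffContOnCl_ball (closedBall_subset_ball hd.2))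
      fun z hz => hB z (closedBall_subset_ball hd.2 (sphere_subset_closedBall hz))
  have h_tendsto : Tendsto (fun d : ℝ => j.factorial * B / d ^ j) (𝓝[<] 1)
      (𝓝 (j.factorial * B / 1 ^ j)) :=
    (continuousAt_const.div (continuousAt_id.pow j) (by simp)).continuousWithinAt
  rw [one_pow, div_one] at h_tendsto
  exact ge_of_tendsto h_tendsto (mem_of_superset (Ioo_mem_nhdsLT one_pos) on_smaller_disc)

theorem norm_sub_jetPolynomial_le (hH : DifferentiableOn ℂ H (ball 0 1))
    (hB : ∀ s ∈ ball (0 : ℂ) 1, ‖H s‖ ≤ B) {s : ℂ} (hs : ‖s‖ ≤ 1 / 2) :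
    ‖H s - jetPolynomial m (iteratedDeriv · H 0) s‖ ≤ 2 * B * ‖s‖ ^ (m + 1) := by
  have hB₀ : 0 ≤ B := (norm_nonneg _).trans (hB 0 (mem_ball_self one_pos))
  have h_tail := (hasSum_nat_add_iff' (m + 1)).mpr
    (Complex.hasSum_taylorSeries_on_ball hH (mem_ball_zero_iff.mpr (by linarith : ‖s‖ < 1)))
  have h_jet : ∑ j ∈ Finset.range (m + 1), (j.factorial : ℂ)⁻¹ • (s - 0) ^ j • iteratedDeriv j H 0
      = jetPolynomial m (iteratedDeriv · H 0) s := Finset.sum_congr rfl fun j _ => by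
    rw [smul_smul, sub_zero, div_eq_inv_mul]
  rw [h_jet] at h_tail
  have h_geom := (hasSum_geometric_of_lt_one (norm_nonneg s) (by linarith)).mul_left
    (B * ‖s‖ ^ (m + 1))
  refine (h_tail.norm_le_of_bounded h_geom fun j => ?_).trans ?_
  · rw [norm_smul, norm_smul, norm_inv, Complex.norm_natCast, sub_zero, norm_pow,
      inv_mul_le_iff₀ (by positivity)]
    calc ‖s‖ ^ (j + (m + 1)) * ‖iteratedDeriv (j + (m + 1)) H 0‖
        ≤ ‖s‖ ^ (j + (m + 1)) * ((j + (m + 1)).factorial * B) := by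
          gcongr
          exact norm_iteratedDeriv_zero_le_factorial_mul hH hB _
      _ = _ := by ring
  · have h_inv : (1 - ‖s‖)⁻¹ ≤ 2 := inv_le_of_inv_le₀ two_pos (by linarith)
    nlinarith [mul_nonneg hB₀ (pow_nonneg (norm_nonneg s) (m + 1))]

theorem iteratedDeriv_eq_of_sub_isLittleO {g : ℝ → Y} {θ : ℝ} (hg : ContDiff ℝ m g)
    (hH : DifferentiableOn ℂ H (ball 0 1)) (hB : ∀ s ∈ ball (0 : ℂ) 1, ‖H s‖ ≤ B)
    (h : (fun s : ℝ => g (θ + s) - H s) =o[𝓝 0] fun s => s ^ m) {j : ℕ} (hj : j ≤ m) :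
    iteratedDeriv j g θ = iteratedDeriv j H 0 := by
  refine sub_eq_zero.mp (eq_zero_of_jetPolynomial_isLittleO
    (a := fun j => iteratedDeriv j g θ - iteratedDeriv j H 0) ?_ hj)
  have h_taylor : (fun s : ℝ => g (θ + s) - jetPolynomial m (iteratedDeriv · g θ) s)
      =o[𝓝 0] fun s => s ^ m := by
    have h_shift : Tendsto (fun s => θ + s) (𝓝 0) (𝓝 θ) := by
      simpa only [add_zero] using (continuous_const_add θ).tendsto 0
    simpa only [jetPolynomial_iteratedDeriv_ofReal, Function.comp_def, add_sub_cancel_left] using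
      (taylor_isLittleO_univ (x₀ := θ) hg).comp_tendsto h_shift
  have h_power : (fun s : ℝ => H s - jetPolynomial m (iteratedDeriv · H 0) s)
      =o[𝓝 0] fun s => s ^ m := by
    refine (Asymptotics.IsBigO.of_bound (2 * B) ?_).trans_isLittleO
      (Asymptotics.isLittleO_pow_pow m.lt_succ_self)
    filter_upwards [closedBall_mem_nhds (0 : ℝ) one_half_pos] with s hs
    rw [mem_closedBall_zero_iff] at hs
    rw [norm_pow, ← Complex.norm_real]
    exact norm_sub_jetPolynomial_le hH hB (by rwa [Complex.norm_real])
  refine ((h.sub h_taylor).add h_power).congr_left fun s => ?_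
  rw [← jetPolynomial_sub]
  abel

end JetRemainder

section HolomorphicJets

variable {E Y : Type u} [NormedAddCommGroup E] [NormedSpace ℂ E]
  [NormedAddCommGroup Y] [NormedSpace ℂ Y]

/-- `G s u`, defined for `s` in the complex unit disc, agrees with `g (θ + s) u` to order `m` at
`s = 0`. By Cauchy's estimates in `s`, the single bound `C` on `G` controls the derivatives
`∂_θ^ν g`, `ν ≤ m`, by `ν! C`. -/
structure IsHolomorphicJet (m : ℕ) (g : ℝ → E → Y) (U : Set E) (C θ : ℝ) (G : ℂ → E → Y) :
    Prop where
  differentiableOn : DifferentiableOn ℂ (Function.uncurry G) (ball 0 1 ×ˢ U)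
  norm_le : ∀ s ∈ ball (0 : ℂ) 1, ∀ u ∈ U, ‖G s u‖ ≤ C
  isLittleO : ∀ u ∈ U, (fun s : ℝ => g (θ + s) u - G s u) =o[𝓝 0] fun s => s ^ m

/-- The family `g` is `C^m` in `θ` and has at every `θ` a holomorphic jet of order `m` bounded by
`C`. Unlike a list of bounds on `∂_θ^ν g`, this notion is stable under composition without loss in
the constants. -/
structure HasHolomorphicJets (m : ℕ) (g : ℝ → E → Y) (U : Set E) (C : ℝ) : Prop where
  contDiff : ∀ u ∈ U, ContDiff ℝ m (g · u)
  exists_jet : ∀ θ, ∃ G, IsHolomorphicJet m g U C θ G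

variable {m : ℕ} {g : ℝ → E → Y} {U V : Set E} {C θ δ : ℝ} {G : ℂ → E → Y}

namespace IsHolomorphicJet

theorem differentiableOn_left (hG : IsHolomorphicJet m g U C θ G) {u : E} (hu : u ∈ U) :
    DifferentiableOn ℂ (G · u) (ball 0 1) :=
  hG.differentiableOn.comp (f := fun s : ℂ => (s, u)) (by fun_prop) fun _ hs => ⟨hs, hu⟩

theorem differentiableOn_right (hG : IsHolomorphicJet m g U C θ G) {s : ℂ} (hs : s ∈ ball 0 1) :
    DifferentiableOn ℂ (G s) U :=
  hG.differentiableOn.comp (f := fun u : E => (s, u)) (by fun_prop) fun _ hu => ⟨hs, hu⟩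

theorem iteratedDeriv_eq [CompleteSpace Y] (hG : IsHolomorphicJet m g U C θ G) {u : E}
    (hg : ContDiff ℝ m (g · u)) (hu : u ∈ U) {j : ℕ} (hj : j ≤ m) :
    iteratedDeriv j (g · u) θ = iteratedDeriv j (G · u) 0 :=
  iteratedDeriv_eq_of_sub_isLittleO hg (hG.differentiableOn_left hu)
    (fun s hs => hG.norm_le s hs u hu) (hG.isLittleO u hu) hj

end IsHolomorphicJet

namespace HasHolomorphicJets

theorem differentiableOn_iteratedDeriv [CompleteSpace Y] (hg : HasHolomorphicJets m g U C)
    (hU : IsOpen U) {ν : ℕ} (hν : ν ≤ m) (θ : ℝ) :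
    DifferentiableOn ℂ (fun u => iteratedDeriv ν (g · u) θ) U := by
  obtain ⟨G, hG⟩ := hg.exists_jet θ
  refine DifferentiableOn.congr ?_ fun u hu => hG.iteratedDeriv_eq (hg.contDiff u hu) hu hν
  exact (differentiableOn_uncurry_iteratedDeriv (isOpen_ball.prod hU) hG.differentiableOn ν).comp
    (f := fun u : E => ((0 : ℂ), u)) (by fun_prop) fun _ hu => ⟨mem_ball_self one_pos, hu⟩

theorem norm_iteratedDeriv_le [CompleteSpace Y] (hg : HasHolomorphicJets m g U C) {ν : ℕ}
    (hν : ν ≤ m) (θ : ℝ) {u : E} (hu : u ∈ U) :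
    ‖iteratedDeriv ν (g · u) θ‖ ≤ ν.factorial * C := by
  obtain ⟨G, hG⟩ := hg.exists_jet θ
  rw [hG.iteratedDeriv_eq (hg.contDiff u hu) hu hν]
  exact norm_iteratedDeriv_zero_le_factorial_mul (hG.differentiableOn_left hu)
    (fun s hs => hG.norm_le s hs u hu) ν

theorem norm_le [CompleteSpace Y] (hg : HasHolomorphicJets m g U C) (θ : ℝ) {u : E} (hu : u ∈ U) :
    ‖g θ u‖ ≤ C := by
  simpa using hg.norm_iteratedDeriv_le m.zero_le θ hu

theorem differentiableOn [CompleteSpace Y] (hg : HasHolomorphicJets m g U C) (hU : IsOpen U)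
    (θ : ℝ) : DifferentiableOn ℂ (g θ) U := by
  simpa only [iteratedDeriv_zero] using hg.differentiableOn_iteratedDeriv hU m.zero_le θ

theorem holomorphicTower [CompleteSpace Y] (hg : HasHolomorphicJets m g U C) (hU : IsOpen U) :
    HolomorphicTower m (fun ν θ u => iteratedDeriv ν (g · u) θ) U (m.factorial * C) :=
  .of_contDiff hg.contDiff (fun _ hν θ => hg.differentiableOn_iteratedDeriv hU hν θ)
    fun ν hν θ u hu => by
      have hC : 0 ≤ C := (norm_nonneg _).trans (hg.norm_le θ hu)
      refine (hg.norm_iteratedDeriv_le hν θ hu).trans ?_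
      gcongr

theorem contDiffOn_uncurry [CompleteSpace Y] (hg : HasHolomorphicJets m g U C) (hU : IsOpen U) :
    ContDiffOn ℝ m (Function.uncurry g) (univ ×ˢ U) := by
  simpa only [iteratedDeriv_zero] using (hg.holomorphicTower hU).contDiffOn_uncurry hU

theorem norm_sub_le_mul_pow [CompleteSpace Y] (hg : HasHolomorphicJets m g U C)
    (hG : IsHolomorphicJet m g U C θ G) {s : ℝ} (hs : |s| ≤ 1 / 2) {u : E} (hu : u ∈ U) :
    ‖g (θ + s) u - G s u‖ ≤ 2 * (m.factorial + 1) * C * |s| ^ m := by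
  have hC : 0 ≤ C := (norm_nonneg _).trans (hg.norm_le θ hu)
  have h_real := norm_sub_taylorWithinEval_univ_le (hg.contDiff u hu)
    (fun t => hg.norm_iteratedDeriv_le le_rfl t hu) θ (θ + s)
  have h_complex := norm_sub_jetPolynomial_le (m := m) (s := s) (hG.differentiableOn_left hu)
    (fun s hs => hG.norm_le s hs u hu) (by rwa [Complex.norm_real])
  rw [← jetPolynomial_iteratedDeriv_ofReal, add_sub_cancel_left,
    jetPolynomial_congr fun j hj => hG.iteratedDeriv_eq (hg.contDiff u hu) hu hj] at h_real
  rw [norm_sub_rev, Complex.norm_real, Real.norm_eq_abs] at h_complex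
  have h_pow : 2 * C * |s| ^ (m + 1) ≤ 2 * C * |s| ^ m :=
    mul_le_mul_of_nonneg_left (pow_le_pow_of_le_one (abs_nonneg s) (by linarith) m.le_succ)
      (by positivity)
  calc ‖g (θ + s) u - G s u‖ ≤ _ := norm_sub_le_norm_sub_add_norm_sub _ _ _
    _ ≤ 2 * (m.factorial * C) * |s| ^ m + 2 * C * |s| ^ m :=
      add_le_add h_real (h_complex.trans h_pow)
    _ = _ := by ring

end HasHolomorphicJets

end HolomorphicJets

section JetCalculus

variable {E F Y : Type u} [NormedAddCommGroup E] [NormedSpace ℂ E] [NormedAddCommGroup F]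
  [NormedSpace ℂ F] [NormedAddCommGroup Y] [NormedSpace ℂ Y] {m : ℕ} {U V : Set E} {C D δ : ℝ}

namespace HasHolomorphicJets

theorem mono {g : ℝ → E → Y} (hg : HasHolomorphicJets m g U C) (hVU : V ⊆ U) (hCD : C ≤ D) :
    HasHolomorphicJets m g V D where
  contDiff u hu := hg.contDiff u (hVU hu)
  exists_jet θ := by
    obtain ⟨G, hG⟩ := hg.exists_jet θ
    exact ⟨G, hG.differentiableOn.mono (prod_mono_right hVU),
      fun s hs u hu => (hG.norm_le s hs u (hVU hu)).trans hCD, fun u hu => hG.isLittleO u (hVU hu)⟩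

theorem congr {g h : ℝ → E → Y} (hg : HasHolomorphicJets m g U C)
    (hgh : ∀ θ, ∀ u ∈ U, h θ u = g θ u) : HasHolomorphicJets m h U C where
  contDiff u hu := (funext fun θ => hgh θ u hu : (h · u) = (g · u)) ▸ hg.contDiff u hu
  exists_jet θ := by
    obtain ⟨G, hG⟩ := hg.exists_jet θ
    refine ⟨G, hG.differentiableOn, hG.norm_le, fun u hu => ?_⟩
    simpa only [hgh _ u hu] using hG.isLittleO u hu

theorem of_le {g : ℝ → E → Y} {k : ℕ} (hg : HasHolomorphicJets m g U C) (hkm : k ≤ m) :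
    HasHolomorphicJets k g U C where
  contDiff u hu := (hg.contDiff u hu).of_le (by exact_mod_cast hkm)
  exists_jet θ := by
    obtain ⟨G, hG⟩ := hg.exists_jet θ
    refine ⟨G, hG.differentiableOn, hG.norm_le, fun u hu => (hG.isLittleO u hu).trans_isBigO ?_⟩
    obtain rfl | hlt := hkm.eq_or_lt
    · exact Asymptotics.isBigO_refl _ _
    · exact (Asymptotics.isLittleO_pow_pow hlt).isBigO

theorem const {w : E → Y} (hw : DifferentiableOn ℂ w U) (hC : ∀ u ∈ U, ‖w u‖ ≤ C) :
    HasHolomorphicJets m (fun _ => w) U C where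
  contDiff _ _ := contDiff_const
  exists_jet _ := ⟨fun _ => w, hw.comp (f := Prod.snd) differentiableOn_snd fun _ hq => hq.2,
    fun _ _ => hC, fun u _ => by simpa only [sub_self] using Asymptotics.isLittleO_zero _ _⟩

theorem sub {g h : ℝ → E → Y} (hg : HasHolomorphicJets m g U C) (hh : HasHolomorphicJets m h U D) :
    HasHolomorphicJets m (fun θ u => g θ u - h θ u) U (C + D) where
  contDiff u hu := (hg.contDiff u hu).sub (hh.contDiff u hu)
  exists_jet θ := by
    obtain ⟨G, hG⟩ := hg.exists_jet θ
    obtain ⟨H, hH⟩ := hh.exists_jet θ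
    refine ⟨fun s u => G s u - H s u, hG.differentiableOn.sub hH.differentiableOn,
      fun s hs u hu => (norm_sub_le _ _).trans (add_le_add (hG.norm_le s hs u hu)
        (hH.norm_le s hs u hu)), fun u hu => ?_⟩
    simpa only [sub_sub_sub_comm] using (hG.isLittleO u hu).sub (hH.isLittleO u hu)

theorem const_smul {g : ℝ → E → Y} (hg : HasHolomorphicJets m g U C) {ε : ℝ} (hε : 0 ≤ ε) :
    HasHolomorphicJets m (fun θ u => ε • g θ u) U (ε * C) where
  contDiff u hu := (hg.contDiff u hu).const_smul ε
  exists_jet θ := by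
    obtain ⟨G, hG⟩ := hg.exists_jet θ
    refine ⟨fun s u => ε • G s u, hG.differentiableOn.const_smul ε, fun s hs u hu => ?_,
      fun u hu => ?_⟩
    · rw [norm_smul, Real.norm_of_nonneg hε]
      exact mul_le_mul_of_nonneg_left (hG.norm_le s hs u hu) hε
    · simp only [← smul_sub]
      exact (hG.isLittleO u hu).const_smul_left ε

theorem clm_apply {A : ℝ → E → F →L[ℂ] Y} {w : E → F} (hA : HasHolomorphicJets m A U C)
    (hw : DifferentiableOn ℂ w U) (hD : ∀ u ∈ U, ‖w u‖ ≤ D) :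
    HasHolomorphicJets m (fun θ u => A θ u (w u)) U (C * D) where
  contDiff u hu := (ContinuousLinearMap.apply ℂ Y (w u)).restrictScalars ℝ |>.contDiff.comp
    (hA.contDiff u hu)
  exists_jet θ := by
    obtain ⟨G, hG⟩ := hA.exists_jet θ
    refine ⟨fun s u => G s u (w u), hG.differentiableOn.clm_apply
      (hw.comp (f := Prod.snd) differentiableOn_snd fun _ hq => hq.2), fun s hs u hu =>
      (G s u).le_of_opNorm_le_of_le (hG.norm_le s hs u hu) (hD u hu), fun u hu => ?_⟩
    refine (Asymptotics.IsBigO.of_bound ‖w u‖ (.of_forall fun s => ?_)).trans_isLittleO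
      (hG.isLittleO u hu)
    rw [← sub_apply, mul_comm]
    exact ContinuousLinearMap.le_opNorm _ _

protected theorem fderiv [CompleteSpace Y] {g : ℝ → E → Y} (hg : HasHolomorphicJets (m + 1) g U C)
    (hU : IsOpen U) (hδ : 0 < δ) (hV : ∀ u ∈ V, ball u δ ⊆ U) :
    HasHolomorphicJets m (fun θ u => fderiv ℂ (g θ) u) V (C / δ) where
  contDiff u hu := by
    have h_near : ∀ v ∈ ball u (δ / 2), ball v (δ / 2) ⊆ U := fun v hv =>
      (ball_subset_ball' (by linarith [mem_ball.mp hv])).trans (hV u hu)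
    have h_joint := ((hg.holomorphicTower hU).fderiv hU (half_pos hδ) h_near).contDiffOn_uncurry
      isOpen_ball
    simp only [iteratedDeriv_zero] at h_joint
    exact h_joint.comp_contDiff (contDiff_id.prodMk contDiff_const) fun θ =>
      ⟨mem_univ θ, mem_ball_self (half_pos hδ)⟩
  exists_jet θ := by
    obtain ⟨G, hG⟩ := hg.exists_jet θ
    have hVU : V ⊆ U := fun u hu => hV u hu (mem_ball_self hδ)
    have h_partial : ∀ s ∈ ball (0 : ℂ) 1, ∀ u ∈ V, fderiv ℂ (G s) u
        = (fderiv ℂ (Function.uncurry G) (s, u)).comp (.inr ℂ ℂ E) := fun s hs u hu =>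
      ((hG.differentiableOn.differentiableAt ((isOpen_ball.prod hU).mem_nhds
        ⟨hs, hVU hu⟩)).hasFDerivAt.comp u (hasFDerivAt_prodMk_right s u)).fderiv
    refine ⟨fun s u => fderiv ℂ (G s) u, ?_, fun s hs u hu =>
      norm_fderiv_le_div_of_forall_mem_ball_norm_le hδ
        ((hG.differentiableOn_right hs).mono (hV u hu))
        fun v hv => hG.norm_le s hs v (hV u hu hv), fun u hu => ?_⟩
    · refine DifferentiableOn.congr ?_ fun q hq => h_partial q.1 hq.1 q.2 hq.2
      exact ((differentiableOn_fderiv (isOpen_ball.prod hU) hG.differentiableOn).mono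
        (prod_mono_right hVU)).clm_comp (differentiableOn_const _)
    · have h_pow : (fun s : ℝ => s ^ (m + 1)) =o[𝓝 0] fun s => s ^ m :=
        Asymptotics.isLittleO_pow_pow m.lt_succ_self
      refine (Asymptotics.IsBigO.of_bound (2 * ((m + 1).factorial + 1) * C / δ) ?_).trans_isLittleO
        h_pow
      filter_upwards [closedBall_mem_nhds (0 : ℝ) one_half_pos] with s hs
      rw [mem_closedBall_zero_iff, Real.norm_eq_abs] at hs
      have hs' : (s : ℂ) ∈ ball 0 1 := by
        rw [mem_ball_zero_iff, Complex.norm_real, Real.norm_eq_abs]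
        linarith
      have hg_diff := hg.differentiableOn hU (θ + s)
      have hG_diff := hG.differentiableOn_right hs'
      rw [← fderiv_sub (hg_diff.differentiableAt (hU.mem_nhds (hVU hu)))
        (hG_diff.differentiableAt (hU.mem_nhds (hVU hu))), norm_pow, Real.norm_eq_abs]
      exact (norm_fderiv_le_div_of_forall_mem_ball_norm_le hδ ((hg_diff.sub hG_diff).mono (hV u hu))
        fun v hv => hg.norm_sub_le_mul_pow hG hs (hV u hu hv)).trans_eq (by ring)

theorem isLittleO_comp_sub_comp [CompleteSpace Y] {g : ℝ → E → Y} {G : ℂ → E → Y} {θ a r : ℝ}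
    {u : E} {x y : ℝ → E} (hg : HasHolomorphicJets m g U C) (hG : IsHolomorphicJet m g U C θ G)
    (hU : IsOpen U) (har : a < r) (hu : ball u r ⊆ U) (hx : ∀ s, x s ∈ closedBall u a)
    (hx₀ : ContinuousAt x 0) (hy : ∀ᶠ s in 𝓝 0, y s ∈ closedBall u a)
    (hxy : (fun s => x s - y s) =o[𝓝 0] fun s : ℝ => s ^ m) :
    (fun s : ℝ => g (θ + s) (x s) - G s (y s)) =o[𝓝 0] fun s => s ^ m := by
  have h_disc : ∀ᶠ s : ℝ in 𝓝 0, |s| ≤ 1 / 2 ∧ (s : ℂ) ∈ ball 0 1 := by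
    filter_upwards [closedBall_mem_nhds (0 : ℝ) one_half_pos] with s hs
    rw [mem_closedBall_zero_iff, Real.norm_eq_abs] at hs
    rw [mem_ball_zero_iff, Complex.norm_real, Real.norm_eq_abs]
    exact ⟨hs, by linarith⟩
  have h_frozen : (fun s : ℝ => g (θ + s) (x 0) - G s (x 0)) =o[𝓝 0] fun s => s ^ m :=
    hG.isLittleO _ (hu (closedBall_subset_ball har (hx 0)))
  -- The remainder `g (θ + s) - G s` is `O(s ^ m)` on `ball u r`, hence Lipschitz with such a
  -- constant on the smaller ball; so its argument can be frozen at `x 0`.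
  have h_freeze : (fun s : ℝ => (g (θ + s) (x s) - G s (x s)) - (g (θ + s) (x 0) - G s (x 0)))
      =o[𝓝 0] fun s => s ^ m := by
    have h_small : (fun s : ℝ => s ^ m * ‖x s - x 0‖) =o[𝓝 0] fun s => s ^ m * 1 := by
      refine (Asymptotics.isBigO_refl _ _).mul_isLittleO ((Asymptotics.isLittleO_one_iff ℝ).mpr ?_)
      simpa only [sub_self, norm_zero, ContinuousAt] using (hx₀.sub_const (x 0)).norm
    simp only [mul_one] at h_small
    refine (Asymptotics.IsBigO.of_bound (2 * (m.factorial + 1) * C / (r - a)) ?_).trans_isLittleO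
      h_small
    filter_upwards [h_disc] with s ⟨hs, hs'⟩
    refine (norm_sub_le_of_forall_mem_ball_norm_le
      (((hg.differentiableOn hU (θ + s)).sub (hG.differentiableOn_right hs')).mono hu)
      (fun v hv => hg.norm_sub_le_mul_pow hG hs (hu hv)) har (hx s) (hx 0)).trans_eq ?_
    rw [norm_mul, norm_norm, norm_pow, Real.norm_eq_abs]
    ring
  have h_lipschitz : (fun s : ℝ => G s (x s) - G s (y s)) =o[𝓝 0] fun s => s ^ m := by
    refine (Asymptotics.IsBigO.of_bound (C / (r - a)) ?_).trans_isLittleO hxy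
    filter_upwards [h_disc, hy] with s ⟨_, hs⟩ hys
    exact norm_sub_le_of_forall_mem_ball_norm_le ((hG.differentiableOn_right hs).mono hu)
      (fun v hv => hG.norm_le s hs v (hu hv)) har (hx s) hys
  refine ((h_freeze.add h_frozen).add h_lipschitz).congr_left fun s => ?_
  rw [sub_add_cancel, sub_add_sub_cancel]

theorem comp [CompleteSpace Y] [CompleteSpace E] {g : ℝ → E → Y} {N : ℝ → E → E} {a r : ℝ}
    (hg : HasHolomorphicJets m g U C) (hN : HasHolomorphicJets m N V a) (hU : IsOpen U)
    (har : a < r) (hV : ∀ u ∈ V, ball u r ⊆ U) :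
    HasHolomorphicJets m (fun θ u => g θ (u + N θ u)) V C := by
  have h_mem : ∀ u : E, ∀ v : E, ‖v‖ ≤ a → u + v ∈ closedBall u a := fun u v hv => by
    rwa [mem_closedBall_iff_norm, add_sub_cancel_left]
  have h_sub : ∀ u ∈ V, closedBall u a ⊆ U := fun u hu =>
    (closedBall_subset_ball har).trans (hV u hu)
  refine ⟨fun u hu => (hg.contDiffOn_uncurry hU).comp_contDiff
    (contDiff_id.prodMk (contDiff_const.add (hN.contDiff u hu))) fun θ =>
      ⟨mem_univ θ, h_sub u hu (h_mem u _ (hN.norm_le θ hu))⟩, fun θ => ?_⟩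
  obtain ⟨G, hG⟩ := hg.exists_jet θ
  obtain ⟨H, hH⟩ := hN.exists_jet θ
  have hH_mem : ∀ s ∈ ball (0 : ℂ) 1, ∀ u ∈ V, u + H s u ∈ closedBall u a := fun s hs u hu =>
    h_mem u _ (hH.norm_le s hs u hu)
  refine ⟨fun s u => G s (u + H s u), ?_, fun s hs u hu =>
    hG.norm_le s hs _ (h_sub u hu (hH_mem s hs u hu)), fun u hu => ?_⟩
  · exact hG.differentiableOn.comp (differentiableOn_fst.prodMk
      (differentiableOn_snd.add hH.differentiableOn)) fun q hq =>
        ⟨hq.1, h_sub q.2 hq.2 (hH_mem q.1 hq.1 q.2 hq.2)⟩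
  · refine hg.isLittleO_comp_sub_comp hG hU har (hV u hu)
      (fun s => h_mem u _ (hN.norm_le (θ + s) hu)) ?_ ?_ ?_
    · exact (continuous_const.add ((hN.contDiff u hu).continuous.comp
        (continuous_const_add θ))).continuousAt
    · filter_upwards [ball_mem_nhds (0 : ℝ) one_pos] with s hs
      exact hH_mem s (by simpa using hs) u hu
    · simpa only [add_sub_add_left_eq_sub] using hH.isLittleO u hu
end HasHolomorphicJets

end JetCalculus

section JetIntegral

variable {E Y : Type u} [NormedAddCommGroup E] [NormedSpace ℂ E] [NormedAddCommGroup Y]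
  [NormedSpace ℂ Y] {m : ℕ} {U : Set E} {C D : ℝ}

theorem isLittleO_intervalIntegral_pow_succ {f : ℝ → Y}
    (h : f =o[𝓝 0] fun s => s ^ m) :
    (fun s => ∫ t in (0 : ℝ)..s, f t) =o[𝓝 0] fun s => s ^ (m + 1) := by
  refine Asymptotics.isLittleO_iff.mpr fun c hc => ?_
  obtain ⟨δ, hδ, h_near⟩ := Metric.eventually_nhds_iff_ball.mp (h.bound hc)
  filter_upwards [ball_mem_nhds 0 hδ] with s hs
  have h_bound : ∀ t ∈ uIoc 0 s, ‖f t‖ ≤ c * |s| ^ m := fun t ht => by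
    have hts : |t| ≤ |s| := by
      simpa only [sub_zero] using abs_sub_left_of_mem_uIcc (uIoc_subset_uIcc ht)
    refine (h_near t (mem_ball_zero_iff.mpr (hts.trans_lt (mem_ball_zero_iff.mp hs)))).trans ?_
    rw [norm_pow, Real.norm_eq_abs]
    gcongr
  refine (intervalIntegral.norm_integral_le_of_norm_le_const h_bound).trans_eq ?_
  rw [sub_zero, norm_pow, Real.norm_eq_abs, pow_succ, mul_assoc]

theorem integral_add_sub_ofReal {a : ℝ → Y} {H : ℂ → Y} (ha : Continuous a)
    (hH : ContinuousOn H (ball 0 1)) {s : ℝ} (hs : s ∈ ball 0 1) (θ : ℝ) :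
    ∫ t in (0 : ℝ)..s, (a (θ + t) - H t)
      = (∫ t in (0 : ℝ)..θ + s, a t)
        - ((∫ t in (0 : ℝ)..θ, a t) + (s : ℂ) • ∫ t in (0 : ℝ)..1, H (t * s)) := by
  have h_cont : ContinuousOn (fun t : ℝ => H t) (uIcc 0 s) := by
    refine hH.comp Complex.continuous_ofReal.continuousOn fun t ht => ?_
    have hts : |t| ≤ |s| := by simpa only [sub_zero] using abs_sub_left_of_mem_uIcc ht
    rw [mem_ball_zero_iff, Complex.norm_real]
    exact hts.trans_lt (mem_ball_zero_iff.mp hs)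
  have h_scale := intervalIntegral.smul_integral_comp_mul_right (a := 0) (b := 1)
    (fun t : ℝ => H t) s
  simp only [Complex.ofReal_mul, zero_mul, one_mul] at h_scale
  have h_shift : IntervalIntegrable (fun t => a (θ + t)) MeasureTheory.volume 0 s :=
    (ha.comp (continuous_const_add θ)).intervalIntegrable 0 s
  rw [intervalIntegral.integral_sub h_shift h_cont.intervalIntegrable,
    intervalIntegral.integral_comp_add_left a θ, add_zero, Complex.coe_smul, h_scale,
    sub_add_eq_sub_sub, intervalIntegral.integral_interval_sub_left (ha.intervalIntegrable _ _)
      (ha.intervalIntegrable _ _)]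

namespace HasHolomorphicJets

variable [CompleteSpace Y] {g : ℝ → E → Y}

theorem hasFDerivAt_intervalIntegral (hg : HasHolomorphicJets m g U C) (hm : 1 ≤ m)
    (hU : IsOpen U) (a b : ℝ) {u : E} (hu : u ∈ U) :
    HasFDerivAt (fun v => ∫ θ in a..b, g θ v) (∫ θ in a..b, fderiv ℂ (g θ) u) u := by
  obtain ⟨m, rfl⟩ := Nat.exists_eq_add_of_le' hm
  refine hasFDerivAt_intervalIntegral_of_differentiableOn hU (fun θ _ => hg.differentiableOn hU θ)
    (fun v hv => (hg.contDiff v hv).continuous.continuousOn) (fun v hv => ?_)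
    (fun θ _ v hv => hg.norm_le θ hv) hu
  obtain ⟨δ, hδ, h_sub⟩ := Metric.isOpen_iff.mp hU v hv
  have h_fderiv := hg.fderiv hU hδ (V := {v}) fun w hw => hw ▸ h_sub
  exact (h_fderiv.contDiff v rfl).continuous.continuousOn

theorem differentiableOn_intervalIntegral (hg : HasHolomorphicJets m g U C) (hm : 1 ≤ m)
    (hU : IsOpen U) (a b : ℝ) : DifferentiableOn ℂ (fun u => ∫ θ in a..b, g θ u) U := fun _ hu =>
  (hg.hasFDerivAt_intervalIntegral hm hU a b hu).differentiableAt.differentiableWithinAt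

theorem intervalIntegral (hg : HasHolomorphicJets m g U C) (hm : 1 ≤ m) (hU : IsOpen U)
    (hD : ∀ θ, ∀ u ∈ U, ‖∫ τ in (0 : ℝ)..θ, g τ u‖ ≤ D) :
    HasHolomorphicJets (m + 1) (fun θ u => ∫ τ in (0 : ℝ)..θ, g τ u) U (D + C) where
  contDiff u hu := by
    have h_deriv : ∀ θ, HasDerivAt (fun θ => ∫ τ in (0 : ℝ)..θ, g τ u) (g θ u) θ := fun θ =>
      ((hg.contDiff u hu).continuous.integral_hasStrictDerivAt 0 θ).hasDerivAt
    rw [Nat.cast_add, Nat.cast_one, contDiff_succ_iff_deriv, funext fun θ => (h_deriv θ).deriv]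
    exact ⟨fun θ => (h_deriv θ).differentiableAt, fun h => absurd h (by simp), hg.contDiff u hu⟩
  exists_jet θ := by
    obtain ⟨G, hG⟩ := hg.exists_jet θ
    have h_mean : ∀ s ∈ ball (0 : ℂ) 1, ∀ u ∈ U, ‖∫ t in (0 : ℝ)..1, G (t * s) u‖ ≤ C :=
      fun s hs u hu => by
        simpa only [sub_zero, abs_one, mul_one] using
          intervalIntegral.norm_integral_le_of_norm_le_const (f := fun t : ℝ => G (t * s) u)
            fun t ht => hG.norm_le _ (ofReal_mul_mem_ball (uIoc_subset_uIcc ht) hs) u hu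
    refine ⟨fun s u => (∫ τ in (0 : ℝ)..θ, g τ u) + s • ∫ t in (0 : ℝ)..1, G (t * s) u, ?_,
      fun s hs u hu => ?_, fun u hu => ?_⟩
    · exact ((hg.differentiableOn_intervalIntegral hm hU 0 θ).comp (f := Prod.snd)
        differentiableOn_snd fun _ hq => hq.2).add (differentiableOn_fst.smul
          (differentiableOn_uncurry_integral_comp_mul hU hG.differentiableOn hG.norm_le))
    · refine (norm_add_le _ _).trans (add_le_add (hD θ u hu) ?_)
      rw [norm_smul]
      exact (mul_le_of_le_one_left (norm_nonneg _) (mem_ball_zero_iff.mp hs).le).trans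
        (h_mean s hs u hu)
    · refine (isLittleO_intervalIntegral_pow_succ (hG.isLittleO u hu)).congr' ?_ .rfl
      filter_upwards [ball_mem_nhds (0 : ℝ) one_pos] with s hs
      exact integral_add_sub_ofReal (hg.contDiff u hu).continuous
        (hG.differentiableOn_left hu).continuousOn hs θ

end HasHolomorphicJets

end JetIntegral

section JetOfBounds

variable {E Y : Type u} [NormedAddCommGroup E] [NormedSpace ℂ E] [NormedAddCommGroup Y]
  [NormedSpace ℂ Y] {m : ℕ} {U : Set E}

theorem norm_jetPolynomial_le {a : ℕ → Y} {M q : ℝ} (hM : 0 ≤ M) (hq : 0 ≤ q) (hq₁ : q < 1)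
    (ha : ∀ j ≤ m, ‖a j‖ ≤ M * q ^ j * j.factorial) {s : ℂ} (hs : ‖s‖ ≤ 1) :
    ‖jetPolynomial m a s‖ ≤ M / (1 - q) := by
  have h_term : ∀ j ∈ Finset.range (m + 1), ‖(s ^ j / j.factorial) • a j‖ ≤ M * q ^ j :=
    fun j hj => by
      rw [norm_smul, norm_div, norm_pow, Complex.norm_natCast, div_mul_eq_mul_div,
        div_le_iff₀ (by positivity)]
      exact (mul_le_of_le_one_left (norm_nonneg _) (pow_le_one₀ (norm_nonneg s) hs)).trans
        (ha j (Finset.mem_range_succ_iff.mp hj))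
  calc ‖jetPolynomial m a s‖ ≤ ∑ j ∈ Finset.range (m + 1), M * q ^ j := norm_sum_le_of_le _ h_term
    _ = M * ∑ j ∈ Finset.range (m + 1), q ^ j := (Finset.mul_sum ..).symm
    _ ≤ M / (1 - q) := by
      rw [le_div_iff₀ (sub_pos.mpr hq₁), mul_assoc, geom_sum_mul_neg]
      exact mul_le_of_le_one_right hM (sub_le_self _ (pow_nonneg hq _))

theorem HasHolomorphicJets.of_norm_iteratedDeriv_le {g : ℝ → E → Y} {M q : ℝ} (hM : 0 ≤ M)
    (hq : 0 ≤ q) (hq₁ : q < 1) (hg : ∀ u ∈ U, ContDiff ℝ m (g · u))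
    (h_diff : ∀ ν ≤ m, ∀ θ, DifferentiableOn ℂ (fun u => iteratedDeriv ν (g · u) θ) U)
    (h_norm : ∀ ν ≤ m, ∀ θ, ∀ u ∈ U,
      ‖iteratedDeriv ν (g · u) θ‖ ≤ M * q ^ ν * ν.factorial) :
    HasHolomorphicJets m g U (M / (1 - q)) where
  contDiff := hg
  exists_jet θ := by
    refine ⟨fun s u => jetPolynomial m (fun j => iteratedDeriv j (g · u) θ) s, ?_,
      fun s hs u hu => norm_jetPolynomial_le hM hq hq₁ (fun ν hν => h_norm ν hν θ u hu)
        (mem_ball_zero_iff.mp hs).le, fun u hu => ?_⟩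
    · have h_pow (j : ℕ) : DifferentiableOn ℂ (fun q : ℂ × E => q.1 ^ j / (j.factorial : ℂ))
          (ball 0 1 ×ˢ U) := by fun_prop
      exact DifferentiableOn.fun_sum fun j hj => (h_pow j).smul <|
        (h_diff j (Finset.mem_range_succ_iff.mp hj) θ).comp (f := Prod.snd)
          differentiableOn_snd fun _ hq => hq.2
    · simp only [jetPolynomial_iteratedDeriv_ofReal]
      have h_taylor := taylor_isLittleO_univ (x₀ := θ) (hg u hu)
      have h_shift : Tendsto (fun s : ℝ => θ + s) (𝓝 0) (𝓝 θ) := by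
        simpa only [add_zero] using (continuous_const_add θ).tendsto 0
      simpa only [Function.comp_def, add_sub_cancel_left] using h_taylor.comp_tendsto h_shift

end JetOfBounds

section NearIdentityOperators

variable {𝕜 E : Type*} [NontriviallyNormedField 𝕜] [NormedAddCommGroup E] [NormedSpace 𝕜 E]
  {A : E →L[𝕜] E} {q : ℝ}

theorem isInvertible_of_norm_sub_id_lt_one [CompleteSpace E] (hA : ‖A - .id 𝕜 E‖ < 1) :
    A.IsInvertible := by
  have h_unit : IsUnit (1 - (1 - A)) := isUnit_one_sub_of_norm_lt_one (by rwa [norm_sub_rev])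
  rw [sub_sub_cancel] at h_unit
  exact ⟨ContinuousLinearEquiv.unitsEquiv 𝕜 E h_unit.unit, rfl⟩

theorem norm_inverse_apply_le_of_norm_sub_id_le [CompleteSpace E] (hA : ‖A - .id 𝕜 E‖ ≤ q)
    (hq : q < 1) (w : E) : ‖A.inverse w‖ ≤ ‖w‖ / (1 - q) := by
  have h_apply : A (A.inverse w) = w :=
    (isInvertible_of_norm_sub_id_lt_one (hA.trans_lt hq)).self_apply_inverse w
  have h_diff : ‖A.inverse w‖ - ‖w‖ ≤ q * ‖A.inverse w‖ := by
    have h_sub : (A - .id 𝕜 E) (A.inverse w) = w - A.inverse w := by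
      rw [sub_apply, h_apply, ContinuousLinearMap.id_apply]
    calc ‖A.inverse w‖ - ‖w‖ ≤ ‖(A - .id 𝕜 E) (A.inverse w)‖ := by
          rw [h_sub, norm_sub_rev]
          exact norm_sub_norm_le _ _
      _ ≤ q * ‖A.inverse w‖ := ContinuousLinearMap.le_of_opNorm_le _ hA _
  rw [le_div_iff₀ (sub_pos.mpr hq)]
  linarith

end NearIdentityOperators

section PeriodicPrimitive

variable {Y : Type*} [NormedAddCommGroup Y] [NormedSpace ℝ Y] {g : ℝ → Y} {T B : ℝ}

theorem periodic_intervalIntegral_of_integral_eq_zero (hg : Continuous g)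
    (h_per : Function.Periodic g T) (h_mean : ∫ τ in (0 : ℝ)..T, g τ = 0) :
    Function.Periodic (fun θ => ∫ τ in (0 : ℝ)..θ, g τ) T := fun θ => by
  have h_shift := h_per.intervalIntegral_add_eq θ 0
  rw [zero_add, h_mean] at h_shift
  simp only [← intervalIntegral.integral_add_adjacent_intervals (hg.intervalIntegrable 0 θ)
    (hg.intervalIntegrable θ (θ + T)), h_shift, add_zero]

theorem norm_intervalIntegral_le_of_periodic_of_integral_eq_zero (hT : 0 < T) (hg : Continuous g)
    (h_per : Function.Periodic g T) (h_mean : ∫ τ in (0 : ℝ)..T, g τ = 0) (hB : ∀ θ, ‖g θ‖ ≤ B)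
    (θ : ℝ) : ‖∫ τ in (0 : ℝ)..θ, g τ‖ ≤ B * (T / 2) := by
  have h_reduce : |θ - round (θ / T) * T| ≤ T / 2 := by
    have h_scale : θ - round (θ / T) * T = T * (θ / T - round (θ / T)) := by field_simp
    rw [h_scale, abs_mul, abs_of_pos hT]
    exact (mul_le_mul_of_nonneg_left (abs_sub_round _) hT.le).trans_eq (mul_one_div T 2)
  rw [← (periodic_intervalIntegral_of_integral_eq_zero hg h_per h_mean).sub_int_mul_eq
    (round (θ / T))]
  refine (intervalIntegral.norm_integral_le_of_norm_le_const fun t _ => hB t).trans ?_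
  rw [sub_zero]
  exact mul_le_mul_of_nonneg_left h_reduce ((norm_nonneg _).trans (hB 0))

end PeriodicPrimitive

theorem norm_thAvg_le {E : Type*} [NormedAddCommGroup E] [NormedSpace ℂ E] {g : ℝ → E → E} {u : E}
    {C : ℝ} (hC : ∀ θ, ‖g θ u‖ ≤ C) : ‖thAvg g u‖ ≤ C := by
  simpa only [thAvg, sub_zero, abs_one, mul_one] using
    intervalIntegral.norm_integral_le_of_norm_le_const (a := 0) (b := 1) fun θ _ => hC θ

section StroboscopicStep

variable {E : Type u} [NormedAddCommGroup E] [NormedSpace ℂ E] {p : ℕ}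
  {f Φ : ℝ → E → E} {U V : Set E} {M r : ℝ}

/-- A `1`-periodic vector field on `U`, bounded by `M`, that varies with `θ` to order `p`; the
constant `3 / 2 * M` is what Assumption (A_p) provides with `σ = 3`. -/
structure IsPeriodicField (p : ℕ) (f : ℝ → E → E) (U : Set E) (M : ℝ) : Prop where
  periodic : ∀ u ∈ U, Function.Periodic (f · u) 1
  norm_le : ∀ θ, ∀ u ∈ U, ‖f θ u‖ ≤ M
  hasHolomorphicJets : HasHolomorphicJets p f U (3 / 2 * M)

/-- A `1`-periodic change of variables close to the identity, as produced by the stroboscopic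
averaging iteration: `r` is the loss of domain per iteration, the real deviation from the identity
is at most `r / 5`, and that of the jets at most `4 * r / 5`. -/
structure IsNearIdentity (m : ℕ) (Φ : ℝ → E → E) (U : Set E) (r : ℝ) : Prop where
  periodic : ∀ u ∈ U, Function.Periodic (Φ · u) 1
  norm_sub_le : ∀ θ, ∀ u ∈ U, ‖Φ θ u - u‖ ≤ r / 5
  hasHolomorphicJets : HasHolomorphicJets m (fun θ u => Φ θ u - u) U (4 * r / 5)

/-- The integrand `f_τ(Φ_τ(u)) − ∂_uΦ_τ(u) F(u)` of the stroboscopic averaging iteration. -/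
noncomputable def stroboscopicDefect (f Φ : ℝ → E → E) (τ : ℝ) (u : E) : E :=
  f τ (Φ τ u) - fderiv ℂ (Φ τ) u (aveField f Φ u)

theorem IsPeriodicField.mono (hf : IsPeriodicField p f U M) (hVU : V ⊆ U) :
    IsPeriodicField p f V M :=
  ⟨fun u hu => hf.periodic u (hVU hu), fun θ u hu => hf.norm_le θ u (hVU hu),
    hf.hasHolomorphicJets.mono hVU le_rfl⟩

namespace IsNearIdentity

variable {m : ℕ}

protected theorem id (hr : 0 ≤ r) : IsNearIdentity m (fun _ u => u) U r where
  periodic _ _ _ := rfl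
  norm_sub_le _ u _ := by
    rw [sub_self, norm_zero]
    positivity
  hasHolomorphicJets := by
    simp only [sub_self]
    refine .const (differentiableOn_const 0) fun u _ => ?_
    rw [norm_zero]
    positivity

theorem apply_mem (hΦ : IsNearIdentity m Φ U r) (hr : 0 < r) {u : E} (hu : ball u r ⊆ U) (θ : ℝ) :
    Φ θ u ∈ U := by
  refine hu (mem_ball_iff_norm.mpr ?_)
  linarith [hΦ.norm_sub_le θ u (hu (mem_ball_self hr))]

theorem periodic_stroboscopicDefect (hΦ : IsNearIdentity m Φ U r) (hf : IsPeriodicField p f U M)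
    (hU : IsOpen U) (hr : 0 < r) {u : E} (hu : ball u r ⊆ U) :
    Function.Periodic (stroboscopicDefect f Φ · u) 1 := fun θ => by
  have huU : u ∈ U := hu (mem_ball_self hr)
  have h_near : Φ (θ + 1) =ᶠ[𝓝 u] Φ θ := by
    filter_upwards [hU.mem_nhds huU] with v hv using hΦ.periodic v hv θ
  have h_field : f (θ + 1) (Φ θ u) = f θ (Φ θ u) := hf.periodic _ (hΦ.apply_mem hr hu θ) θ
  simp only [stroboscopicDefect, h_near.fderiv_eq, h_near.eq_of_nhds, h_field]

variable [CompleteSpace E]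

theorem differentiableOn (hΦ : IsNearIdentity m Φ U r) (hU : IsOpen U) (θ : ℝ) :
    DifferentiableOn ℂ (Φ θ) U := by
  simpa only [sub_add_cancel, id_eq] using
    (hΦ.hasHolomorphicJets.differentiableOn hU θ).fun_add differentiableOn_id

theorem fderiv_eq (hΦ : IsNearIdentity m Φ U r) (hU : IsOpen U) (θ : ℝ) {u : E} (hu : u ∈ U) :
    fderiv ℂ (Φ θ) u = .id ℂ E + fderiv ℂ (fun v => Φ θ v - v) u := by
  rw [fderiv_fun_sub ((hΦ.differentiableOn hU θ).differentiableAt (hU.mem_nhds hu))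
    differentiableAt_fun_id, fderiv_fun_id, add_sub_cancel]

theorem norm_fderiv_sub_le (hΦ : IsNearIdentity m Φ U r) (hU : IsOpen U) (hr : 0 < r) {u : E}
    (hu : ball u r ⊆ U) (θ : ℝ) : ‖fderiv ℂ (fun v => Φ θ v - v) u‖ ≤ 1 / 5 :=
  (norm_fderiv_le_div_of_forall_mem_ball_norm_le hr
    ((hΦ.hasHolomorphicJets.differentiableOn hU θ).mono hu)
    fun v hv => hΦ.norm_sub_le θ v (hu hv)).trans_eq (by field_simp)

theorem thAvg_eq (hΦ : IsNearIdentity m Φ U r) {u : E} (hu : u ∈ U) :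
    thAvg Φ u = u + ∫ θ in (0 : ℝ)..1, (Φ θ u - u) := by
  have h_cont := (hΦ.hasHolomorphicJets.contDiff u hu).continuous
  have h_split := intervalIntegral.integral_add (μ := MeasureTheory.volume) (a := 0) (b := 1)
    (intervalIntegrable_const (c := u)) (h_cont.intervalIntegrable 0 1)
  simpa only [thAvg, add_sub_cancel, intervalIntegral.integral_const, sub_zero, one_smul]
    using h_split

theorem norm_thAvg_sub_le (hΦ : IsNearIdentity m Φ U r) {u : E} (hu : u ∈ U) :
    ‖thAvg Φ u - u‖ ≤ r / 5 := by
  rw [hΦ.thAvg_eq hu, add_sub_cancel_left]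
  exact norm_thAvg_le (g := fun θ v => Φ θ v - v) fun θ => hΦ.norm_sub_le θ u hu

theorem hasFDerivAt_thAvg (hΦ : IsNearIdentity m Φ U r) (hm : 1 ≤ m) (hU : IsOpen U) {u : E}
    (hu : u ∈ U) :
    HasFDerivAt (thAvg Φ)
      (.id ℂ E + ∫ θ in (0 : ℝ)..1, fderiv ℂ (fun v => Φ θ v - v) u) u := by
  refine ((hasFDerivAt_id u).add (hΦ.hasHolomorphicJets.hasFDerivAt_intervalIntegral hm hU 0 1
    hu)).congr_of_eventuallyEq ?_
  filter_upwards [hU.mem_nhds hu] with v hv using hΦ.thAvg_eq hv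

theorem differentiableOn_thAvg (hΦ : IsNearIdentity m Φ U r) (hm : 1 ≤ m) (hU : IsOpen U) :
    DifferentiableOn ℂ (thAvg Φ) U := fun _ hu =>
  (hΦ.hasFDerivAt_thAvg hm hU hu).differentiableAt.differentiableWithinAt

theorem norm_fderiv_thAvg_sub_id_le (hΦ : IsNearIdentity m Φ U r) (hm : 1 ≤ m) (hU : IsOpen U)
    (hr : 0 < r) {u : E} (hu : ball u r ⊆ U) : ‖fderiv ℂ (thAvg Φ) u - .id ℂ E‖ ≤ 1 / 5 := by
  rw [(hΦ.hasFDerivAt_thAvg hm hU (hu (mem_ball_self hr))).fderiv, add_sub_cancel_left]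
  simpa only [sub_zero, abs_one, mul_one] using
    intervalIntegral.norm_integral_le_of_norm_le_const (a := 0) (b := 1)
      fun θ _ => hΦ.norm_fderiv_sub_le hU hr hu θ

theorem hasHolomorphicJets_comp (hΦ : IsNearIdentity (p + 1) Φ U r) (hf : IsPeriodicField p f U M)
    (hU : IsOpen U) (hr : 0 < r) (hV : ∀ u ∈ V, ball u r ⊆ U) :
    HasHolomorphicJets p (fun θ u => f θ (Φ θ u)) V (3 / 2 * M) := by
  have hN := (hΦ.hasHolomorphicJets.of_le p.le_succ).mono
    (fun u hu => hV u hu (mem_ball_self hr)) le_rfl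
  simpa only [add_sub_cancel] using hf.hasHolomorphicJets.comp hN hU (by linarith) hV

theorem norm_aveField_le (hΦ : IsNearIdentity m Φ U r) (hm : 1 ≤ m) (hf : IsPeriodicField p f U M)
    (hU : IsOpen U) (hr : 0 < r) {u : E} (hu : ball u r ⊆ U) :
    ‖aveField f Φ u‖ ≤ 5 / 4 * M := by
  have h_avg : ‖thAvg (fun θ v => f θ (Φ θ v)) u‖ ≤ M :=
    norm_thAvg_le fun θ => hf.norm_le θ _ (hΦ.apply_mem hr hu θ)
  calc ‖aveField f Φ u‖ ≤ ‖thAvg (fun θ v => f θ (Φ θ v)) u‖ / (1 - 1 / 5) :=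
        norm_inverse_apply_le_of_norm_sub_id_le (hΦ.norm_fderiv_thAvg_sub_id_le hm hU hr hu)
          (by norm_num) _
    _ ≤ 5 / 4 * M := by
      norm_num1
      linarith

theorem fderiv_thAvg_apply_aveField (hΦ : IsNearIdentity m Φ U r) (hm : 1 ≤ m)
    (hU : IsOpen U) (hr : 0 < r) {u : E} (hu : ball u r ⊆ U) :
    fderiv ℂ (thAvg Φ) u (aveField f Φ u) = thAvg (fun θ v => f θ (Φ θ v)) u :=
  (isInvertible_of_norm_sub_id_lt_one
    ((hΦ.norm_fderiv_thAvg_sub_id_le hm hU hr hu).trans_lt (by norm_num))).self_apply_inverse _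

theorem differentiableOn_aveField (hΦ : IsNearIdentity (p + 1) Φ U r) (hp : 1 ≤ p)
    (hf : IsPeriodicField p f U M) (hU : IsOpen U) (hr : 0 < r) (hVo : IsOpen V)
    (hV : ∀ u ∈ V, ball u r ⊆ U) : DifferentiableOn ℂ (aveField f Φ) V := fun u hu => by
  have hVU : V ⊆ U := fun u hu => hV u hu (mem_ball_self hr)
  have h_inverse : DifferentiableAt ℂ ContinuousLinearMap.inverse (fderiv ℂ (thAvg Φ) u) :=
    ((isInvertible_of_norm_sub_id_lt_one ((hΦ.norm_fderiv_thAvg_sub_id_le p.succ_pos hU hr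
      (hV u hu)).trans_lt (by norm_num))).contDiffAt_map_inverse (n := 1)).differentiableAt
        one_ne_zero
  have h_fderiv := (differentiableOn_fderiv hU (hΦ.differentiableOn_thAvg p.succ_pos hU)).mono hVU
  exact (h_inverse.comp_differentiableWithinAt u (h_fderiv u hu)).clm_apply
    ((hΦ.hasHolomorphicJets_comp hf hU hr hV).differentiableOn_intervalIntegral hp hVo 0 1 u hu)

theorem stroboscopicDefect_eq (hΦ : IsNearIdentity m Φ U r) (hU : IsOpen U) (θ : ℝ) {u : E}
    (hu : u ∈ U) :
    stroboscopicDefect f Φ θ u = f θ (Φ θ u) - aveField f Φ u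
      - fderiv ℂ (fun v => Φ θ v - v) u (aveField f Φ u) := by
  rw [stroboscopicDefect, hΦ.fderiv_eq hU θ hu, add_apply, ContinuousLinearMap.id_apply,
    sub_add_eq_sub_sub]

theorem hasHolomorphicJets_stroboscopicDefect (hΦ : IsNearIdentity (p + 1) Φ U r) (hp : 1 ≤ p)
    (hf : IsPeriodicField p f U M) (hU : IsOpen U) (hr : 0 < r) (hVo : IsOpen V)
    (hV : ∀ u ∈ V, ball u r ⊆ U) :
    HasHolomorphicJets p (stroboscopicDefect f Φ) V (15 / 4 * M) := by
  have hVU : V ⊆ U := fun u hu => hV u hu (mem_ball_self hr)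
  have h_ave_diff := hΦ.differentiableOn_aveField hp hf hU hr hVo hV
  have h_ave : ∀ u ∈ V, ‖aveField f Φ u‖ ≤ 5 / 4 * M := fun u hu =>
    hΦ.norm_aveField_le p.succ_pos hf hU hr (hV u hu)
  have h_fderiv : HasHolomorphicJets p
      (fun θ u => fderiv ℂ (fun v => Φ θ v - v) u (aveField f Φ u)) V
      (4 * r / 5 / r * (5 / 4 * M)) :=
    (hΦ.hasHolomorphicJets.fderiv hU hr hV).clm_apply h_ave_diff h_ave
  have h_jets := ((hΦ.hasHolomorphicJets_comp hf hU hr hV).sub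
    (.const h_ave_diff h_ave)).sub h_fderiv
  refine (h_jets.congr fun θ u hu => hΦ.stroboscopicDefect_eq hU θ (hVU hu)).mono Subset.rfl ?_
  refine le_of_eq ?_
  field_simp
  ring

theorem norm_stroboscopicDefect_le (hΦ : IsNearIdentity m Φ U r) (hm : 1 ≤ m)
    (hf : IsPeriodicField p f U M) (hU : IsOpen U) (hr : 0 < r) {u : E} (hu : ball u r ⊆ U)
    (θ : ℝ) : ‖stroboscopicDefect f Φ θ u‖ ≤ 5 / 2 * M := by
  have h_field := hf.norm_le θ _ (hΦ.apply_mem hr hu θ)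
  have h_ave := hΦ.norm_aveField_le hm hf hU hr hu
  have h_fderiv := (fderiv ℂ (fun v => Φ θ v - v) u).le_of_opNorm_le_of_le
    (hΦ.norm_fderiv_sub_le hU hr hu θ) h_ave
  rw [hΦ.stroboscopicDefect_eq hU θ (hu (mem_ball_self hr))]
  refine (norm_sub_le_of_le (norm_sub_le_of_le h_field h_ave) h_fderiv).trans_eq ?_
  ring

theorem integral_stroboscopicDefect_eq_zero (hΦ : IsNearIdentity (p + 1) Φ U r)
    (hf : IsPeriodicField p f U M) (hU : IsOpen U) (hr : 0 < r) {u : E} (hu : ball u r ⊆ U) :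
    ∫ θ in (0 : ℝ)..1, stroboscopicDefect f Φ θ u = 0 := by
  have huU : u ∈ U := hu (mem_ball_self hr)
  have hV : ∀ v ∈ ({u} : Set E), ball v r ⊆ U := fun v hv => hv ▸ hu
  have h_comp := ((hΦ.hasHolomorphicJets_comp hf hU hr hV).contDiff u rfl).continuous
  have h_fderiv := ((hΦ.hasHolomorphicJets.fderiv hU hr hV).contDiff u rfl).continuous
  have h_sub : Continuous fun θ => f θ (Φ θ u) - aveField f Φ u := h_comp.sub continuous_const
  have h_avg := hΦ.fderiv_thAvg_apply_aveField (f := f) p.succ_pos hU hr hu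
  rw [(hΦ.hasFDerivAt_thAvg p.succ_pos hU huU).fderiv, add_apply, ContinuousLinearMap.id_apply,
    ContinuousLinearMap.intervalIntegral_apply (h_fderiv.intervalIntegrable 0 1), thAvg] at h_avg
  simp only [hΦ.stroboscopicDefect_eq hU _ huU]
  rw [intervalIntegral.integral_sub (h_sub.intervalIntegrable 0 1)
    ((h_fderiv.clm_apply continuous_const).intervalIntegrable 0 1),
    intervalIntegral.integral_sub (h_comp.intervalIntegrable 0 1) intervalIntegrable_const,
    intervalIntegral.integral_const, sub_zero, one_smul, ← h_avg, add_sub_cancel_left, sub_self]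

theorem step (hΦ : IsNearIdentity (p + 1) Φ U r) (hp : 1 ≤ p) (hf : IsPeriodicField p f U M)
    (hU : IsOpen U) (hr : 0 < r) (hVo : IsOpen V) (hV : ∀ u ∈ V, ball u r ⊆ U) {ε : ℝ}
    (hε : 0 ≤ ε) (hεr : 25 / 4 * (ε * M) ≤ r) :
    IsNearIdentity (p + 1)
      (fun θ u => u + ε • ∫ τ in (0 : ℝ)..θ, stroboscopicDefect f Φ τ u) V r := by
  have h_jets := hΦ.hasHolomorphicJets_stroboscopicDefect hp hf hU hr hVo hV
  have h_cont : ∀ u ∈ V, Continuous (stroboscopicDefect f Φ · u) := fun u hu =>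
    (h_jets.contDiff u hu).continuous
  have h_periodic : ∀ u ∈ V, Function.Periodic (stroboscopicDefect f Φ · u) 1 := fun u hu =>
    hΦ.periodic_stroboscopicDefect hf hU hr (hV u hu)
  have h_mean : ∀ u ∈ V, ∫ θ in (0 : ℝ)..1, stroboscopicDefect f Φ θ u = 0 := fun u hu =>
    hΦ.integral_stroboscopicDefect_eq_zero hf hU hr (hV u hu)
  have h_norm : ∀ θ, ∀ u ∈ V, ‖∫ τ in (0 : ℝ)..θ, stroboscopicDefect f Φ τ u‖
      ≤ 5 / 2 * M * (1 / 2) := fun θ u hu =>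
    norm_intervalIntegral_le_of_periodic_of_integral_eq_zero one_pos (h_cont u hu)
      (h_periodic u hu) (h_mean u hu)
      (hΦ.norm_stroboscopicDefect_le p.succ_pos hf hU hr (hV u hu)) θ
  refine ⟨fun u hu θ => ?_, fun θ u hu => ?_, ?_⟩
  · have h_integral := periodic_intervalIntegral_of_integral_eq_zero (h_cont u hu)
      (h_periodic u hu) (h_mean u hu) θ
    simp only [h_integral]
  · rw [add_sub_cancel_left, norm_smul, Real.norm_of_nonneg hε]
    have := mul_le_mul_of_nonneg_left (h_norm θ u hu) hε
    linarith
  · simp only [add_sub_cancel_left]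
    refine ((h_jets.intervalIntegral hp hVo h_norm).const_smul hε).mono Subset.rfl ?_
    linarith

end IsNearIdentity

end StroboscopicStep

section NearIdentityInverse

variable {E : Type*} [NormedAddCommGroup E] [NormedSpace ℂ E] {φ Ψ : E → E} {U V : Set E}
  {v : E} {a : ℝ}

theorem approximatesLinearOn_id_of_norm_sub_le (ha : 0 < a)
    (hφ : DifferentiableOn ℂ φ (ball v (4 * a))) (h_near : ∀ u ∈ ball v (4 * a), ‖φ u - u‖ ≤ a) :
    ApproximatesLinearOn φ (.id ℂ E) (closedBall v (2 * a)) (1 / 2) := fun x hx y hy => by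
  have h_lip := norm_sub_le_of_forall_mem_ball_norm_le (f := fun u => φ u - u)
    (hφ.fun_sub differentiableOn_id) h_near (by linarith) hx hy
  rw [sub_sub_sub_comm] at h_lip
  refine h_lip.trans_eq ?_
  push_cast
  congr 1
  field_simp
  norm_num

theorem norm_sub_le_two_mul_norm_sub
    (h_approx : ApproximatesLinearOn φ (.id ℂ E) (closedBall v (2 * a)) (1 / 2)) {x y : E}
    (hx : x ∈ closedBall v (2 * a)) (hy : y ∈ closedBall v (2 * a)) :
    ‖x - y‖ ≤ 2 * ‖φ x - φ y‖ := by
  have h_dev : ‖φ x - φ y - (x - y)‖ ≤ 1 / 2 * ‖x - y‖ := mod_cast h_approx x hx y hy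
  linarith [norm_le_norm_add_norm_sub (φ x - φ y) (x - y)]

theorem exists_mem_closedBall_apply_eq [CompleteSpace E] (ha : 0 < a)
    (hφ : DifferentiableOn ℂ φ (ball v (4 * a))) (h_near : ∀ u ∈ ball v (4 * a), ‖φ u - u‖ ≤ a) :
    ∃ u ∈ closedBall v a, φ u = v := by
  let idInverse : (ContinuousLinearMap.id ℂ E).NonlinearRightInverse :=
    { toFun := id
      nnnorm := 1
      bound' := fun y => by simp
      right_inv' := fun _ => rfl }
  have h_surj := (approximatesLinearOn_id_of_norm_sub_le ha
    hφ h_near).surjOn_closedBall_of_nonlinearRightInverse idInverse (by positivity) Subset.rfl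
  have hv : v ∈ closedBall (φ v) (((idInverse.nnnorm : ℝ)⁻¹ - (1 / 2 : NNReal)) * (2 * a)) := by
    rw [mem_closedBall_iff_norm']
    refine (h_near v (mem_ball_self (by positivity))).trans_eq ?_
    simp only [idInverse, NNReal.coe_one, NNReal.coe_div, NNReal.coe_ofNat]
    ring
  obtain ⟨u, hu, hφu⟩ := h_surj hv
  refine ⟨u, ?_, hφu⟩
  rw [mem_closedBall_iff_norm', ← hφu]
  exact h_near u (closedBall_subset_ball (by linarith) hu)

theorem continuousAt_of_eventually_apply_eq (ha : 0 < a)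
    (h_approx : ApproximatesLinearOn φ (.id ℂ E) (closedBall v (2 * a)) (1 / 2))
    (hΨ : ∀ᶠ y in 𝓝 v, Ψ y ∈ closedBall y a ∧ φ (Ψ y) = y) : ContinuousAt Ψ v := by
  have h_mem : ∀ᶠ y in 𝓝 v, Ψ y ∈ closedBall v (2 * a) := by
    filter_upwards [hΨ, closedBall_mem_nhds v ha] with y hy hyv
    exact closedBall_subset_closedBall' (by linarith [mem_closedBall.mp hyv]) hy.1
  refine tendsto_iff_norm_sub_tendsto_zero.mpr (squeeze_zero' (.of_forall fun _ => norm_nonneg _)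
    (g := fun y => 2 * ‖y - v‖) ?_ ?_)
  · filter_upwards [hΨ, h_mem] with y hy hy_mem
    simpa only [hy.2, hΨ.self_of_nhds.2] using
      norm_sub_le_two_mul_norm_sub h_approx hy_mem h_mem.self_of_nhds
  · have h_cont : ContinuousAt (fun y => 2 * ‖y - v‖) v := by fun_prop
    simpa only [ContinuousAt, sub_self, norm_zero, mul_zero] using h_cont

theorem differentiableAt_of_eventually_apply_eq [CompleteSpace E] (ha : 0 < a)
    (hφ : DifferentiableOn ℂ φ (ball v (4 * a))) (h_near : ∀ u ∈ ball v (4 * a), ‖φ u - u‖ ≤ a)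
    (hΨ : ∀ᶠ y in 𝓝 v, Ψ y ∈ closedBall y a ∧ φ (Ψ y) = y) : DifferentiableAt ℂ Ψ v := by
  have hΨv : Ψ v ∈ closedBall v a := hΨ.self_of_nhds.1
  have hφ_at : DifferentiableAt ℂ φ (Ψ v) := hφ.differentiableAt
    (isOpen_ball.mem_nhds (closedBall_subset_ball (by linarith) hΨv))
  have h_norm : ‖fderiv ℂ φ (Ψ v) - .id ℂ E‖ < 1 := by
    rw [← fderiv_fun_id, ← fderiv_fun_sub hφ_at differentiableAt_fun_id]
    refine (norm_fderiv_le_div_of_mem_ball (hφ.fun_sub differentiableOn_id) h_near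
      (by linarith) hΨv).trans_lt ?_
    rw [div_lt_one (by linarith)]
    linarith
  obtain ⟨L, hL⟩ := isInvertible_of_norm_sub_id_lt_one h_norm
  have hφ_deriv : HasFDerivAt φ (L : E →L[ℂ] E) (Ψ v) := hL ▸ hφ_at.hasFDerivAt
  exact (hφ_deriv.of_local_left_inverse (continuousAt_of_eventually_apply_eq ha
    (approximatesLinearOn_id_of_norm_sub_le ha hφ h_near) hΨ)
    (hΨ.mono fun _ hy => hy.2)).differentiableAt

theorem exists_differentiableOn_inverse_of_norm_sub_le [CompleteSpace E] (ha : 0 < a)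
    (hφ : DifferentiableOn ℂ φ U) (h_near : ∀ u ∈ U, ‖φ u - u‖ ≤ a)
    (hV : ∀ v ∈ V, ball v (5 * a) ⊆ U) :
    ∃ Ψ : E → E, DifferentiableOn ℂ Ψ V ∧ (∀ u ∈ V, φ (Ψ u) = u) ∧ ∀ u ∈ V, Ψ (φ u) = u := by
  have h_ball : ∀ v ∈ V, ∀ y ∈ closedBall v a, ball y (4 * a) ⊆ U := fun v hv y hy =>
    (ball_subset_ball' (by linarith [mem_closedBall.mp hy])).trans (hV v hv)
  have h_exists : ∀ y, ball y (4 * a) ⊆ U → ∃ u ∈ closedBall y a, φ u = y := fun y hy =>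
    exists_mem_closedBall_apply_eq ha (hφ.mono hy) fun u hu => h_near u (hy hu)
  choose! Ψ hΨ_mem hΨ using h_exists
  have h_self : ∀ {v : E}, v ∈ closedBall v a := mem_closedBall_self ha.le
  refine ⟨Ψ, fun v hv => ?_, fun v hv => hΨ v (h_ball v hv v h_self), fun u hu => ?_⟩
  · have hvU := h_ball v hv v h_self
    refine (differentiableAt_of_eventually_apply_eq ha (hφ.mono hvU)
      (fun u hu => h_near u (hvU hu)) ?_).differentiableWithinAt
    filter_upwards [closedBall_mem_nhds v ha] with y hy
    exact ⟨hΨ_mem y (h_ball v hv y hy), hΨ y (h_ball v hv y hy)⟩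
  · have h_dist : ‖φ u - u‖ ≤ a := h_near u (hV u hu (mem_ball_self (by positivity)))
    have hφu := h_ball u hu (φ u) (mem_closedBall_iff_norm.mpr h_dist)
    have h_sub : closedBall (φ u) a ⊆ closedBall (φ u) (2 * a) :=
      closedBall_subset_closedBall (by linarith)
    have h_inj := norm_sub_le_two_mul_norm_sub
      (approximatesLinearOn_id_of_norm_sub_le ha (hφ.mono hφu) fun w hw => h_near w (hφu hw))
      (h_sub (hΨ_mem _ hφu)) (h_sub (mem_closedBall_iff_norm'.mpr h_dist))
    rw [hΨ _ hφu, sub_self, norm_zero, mul_zero] at h_inj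
    exact sub_eq_zero.mp (norm_le_zero_iff.mp h_inj)

end NearIdentityInverse

section Thickening

open scoped Pointwise

variable {G : Type*} [SeminormedAddCommGroup G] {S : Set G} {r ρ ρ' : ℝ}

theorem ball_subset_thickening_of_mem_thickening_sub {u : G} (hu : u ∈ thickening (ρ - r) S) :
    ball u r ⊆ thickening ρ S := by
  simpa only [add_sub_cancel] using
    (ball_subset_thickening hu r).trans (thickening_thickening_subset r (ρ - r) S)

theorem add_closedBall_subset_thickening (hρ : ρ < ρ') :
    S + closedBall 0 ρ ⊆ thickening ρ' S := by
  rw [← add_ball_zero]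
  exact add_subset_add_left (closedBall_subset_ball hρ)

end Thickening

section StroboscopicIteration

open scoped Pointwise

variable {E : Type u} [NormedAddCommGroup E] [NormedSpace ℂ E] {p : ℕ}
  {f Φ : ℝ → E → E} {S U V : Set E} {M r ρ ε : ℝ}

theorem IsPeriodicField.of_norm_iteratedDeriv_le (hM : 0 ≤ M)
    (h_per : ∀ u ∈ U, Function.Periodic (f · u) 1) (h_cont : ∀ u ∈ U, ContDiff ℝ p (f · u))
    (h_diff : ∀ ν ≤ p, ∀ θ, DifferentiableOn ℂ (fun u => iteratedDeriv ν (f · u) θ) U)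
    (h_norm : ∀ ν ≤ p, ∀ θ, ∀ u ∈ U, 3 ^ ν / ν.factorial * ‖iteratedDeriv ν (f · u) θ‖ ≤ M) :
    IsPeriodicField p f U M where
  periodic := h_per
  norm_le θ u hu := by simpa using h_norm 0 p.zero_le θ u hu
  hasHolomorphicJets := by
    refine (HasHolomorphicJets.of_norm_iteratedDeriv_le (q := 1 / 3) hM (by norm_num)
      (by norm_num) h_cont h_diff fun ν hν θ u hu => ?_).mono Subset.rfl (by norm_num; linarith)
    have h := h_norm ν hν θ u hu
    rw [div_mul_eq_mul_div, div_le_iff₀ (by positivity)] at h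
    rwa [one_div_pow, mul_one_div, div_mul_eq_mul_div, le_div_iff₀' (by positivity)]

namespace IsNearIdentity

variable {m : ℕ}

theorem contDiff (hΦ : IsNearIdentity m Φ U r) {u : E} (hu : u ∈ U) :
    ContDiff ℝ m (Φ · u) := by
  simpa only [sub_add_cancel] using (hΦ.hasHolomorphicJets.contDiff u hu).add
    (contDiff_const (c := u))

theorem iteratedDeriv_eq {ν : ℕ} (hν : 1 ≤ ν) (Φ : ℝ → E → E) (u : E) (θ : ℝ) :
    iteratedDeriv ν (Φ · u) θ = iteratedDeriv ν (fun τ => Φ τ u - u) θ := by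
  have h_split : (Φ · u) = fun τ => u + (Φ τ u - u) := funext fun _ => (add_sub_cancel _ _).symm
  rw [h_split, iteratedDeriv_const_add hν]

variable [CompleteSpace E]

theorem analyticOnNhd (hΦ : IsNearIdentity m Φ U r) (hU : IsOpen U) (θ : ℝ) :
    AnalyticOnNhd ℂ (Φ θ) U :=
  analyticOnNhd_of_differentiableOn hU (hΦ.differentiableOn hU θ)

theorem analyticOnNhd_iteratedDeriv (hΦ : IsNearIdentity m Φ U r) (hU : IsOpen U) {ν : ℕ}
    (hν : 1 ≤ ν) (hνm : ν ≤ m) (θ : ℝ) :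
    AnalyticOnNhd ℂ (fun u => iteratedDeriv ν (Φ · u) θ) U := by
  simp only [iteratedDeriv_eq hν Φ]
  exact analyticOnNhd_of_differentiableOn hU
    (hΦ.hasHolomorphicJets.differentiableOn_iteratedDeriv hU hνm θ)

theorem norm_iteratedDeriv_le (hΦ : IsNearIdentity m Φ U r) {ν : ℕ} (hν : 1 ≤ ν) (hνm : ν ≤ m)
    (θ : ℝ) {u : E} (hu : u ∈ U) : ‖iteratedDeriv ν (Φ · u) θ‖ ≤ 4 * r / 5 * ν.factorial := by
  rw [iteratedDeriv_eq hν, mul_comm]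
  exact hΦ.hasHolomorphicJets.norm_iteratedDeriv_le hνm θ hu

theorem exists_analyticOnNhd_inverse (hΦ : IsNearIdentity m Φ U r) (hU : IsOpen U) (hr : 0 < r)
    (hVo : IsOpen V) (hV : ∀ u ∈ V, ball u r ⊆ U) (θ : ℝ) :
    ∃ Ψ : E → E, AnalyticOnNhd ℂ Ψ V ∧ (∀ u ∈ V, Φ θ (Ψ u) = u) ∧ ∀ u ∈ V, Ψ (Φ θ u) = u := by
  obtain ⟨Ψ, hΨ, h_inv⟩ := exists_differentiableOn_inverse_of_norm_sub_le (a := r / 5)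
    (by positivity) (hΦ.differentiableOn hU θ) (hΦ.norm_sub_le θ)
    (by rwa [mul_div_cancel₀ r (by norm_num)])
  exact ⟨Ψ, analyticOnNhd_of_differentiableOn hVo hΨ, h_inv⟩

theorem exists_analyticOnNhd_inverse_thAvg (hΦ : IsNearIdentity m Φ U r) (hm : 1 ≤ m)
    (hU : IsOpen U) (hr : 0 < r) (hVo : IsOpen V) (hV : ∀ u ∈ V, ball u r ⊆ U) :
    ∃ χ : E → E, AnalyticOnNhd ℂ χ V ∧ (∀ u ∈ V, thAvg Φ (χ u) = u) ∧
      ∀ u ∈ V, χ (thAvg Φ u) = u := by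
  obtain ⟨χ, hχ, h_inv⟩ := exists_differentiableOn_inverse_of_norm_sub_le (a := r / 5)
    (by positivity) (hΦ.differentiableOn_thAvg hm hU) (fun _ hu => hΦ.norm_thAvg_sub_le hu)
    (by rwa [mul_div_cancel₀ r (by norm_num)])
  exact ⟨χ, analyticOnNhd_of_differentiableOn hVo hχ, h_inv⟩

end IsNearIdentity

variable [CompleteSpace E]

theorem isNearIdentity_PhiIter (hp : 1 ≤ p) (hf : IsPeriodicField p f (thickening ρ S) M)
    (hr : 0 < r) (hε : 0 ≤ ε) (hεr : 25 / 4 * (ε * M) ≤ r) (k : ℕ) :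
    IsNearIdentity (p + 1) (PhiIter f ε k) (thickening (ρ - k * r) S) r := by
  induction k with
  | zero => exact .id hr.le
  | succ k ih =>
    refine ih.step hp (hf.mono (thickening_mono (sub_le_self ρ (by positivity)) S))
      isOpen_thickening hr isOpen_thickening
      (fun u hu => ball_subset_thickening_of_mem_thickening_sub ?_) hε hεr
    rwa [sub_sub, ← add_one_mul, ← Nat.cast_succ]

theorem exists_isOpen_isNearIdentity_PhiIter (hp : 1 ≤ p)
    (hf : IsPeriodicField p f (thickening ρ S) M) (hr : 0 < r) (hε : 0 ≤ ε)
    (hεr : 25 / 4 * (ε * M) ≤ r) {d : ℝ} (hrd : r < d) (k : ℕ) :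
    ∃ U, IsOpen U ∧ S + closedBall 0 (ρ - k * d) ⊆ U ∧
      IsNearIdentity (p + 1) (PhiIter f ε k) U r := by
  obtain rfl | hk := k.eq_zero_or_pos
  · exact ⟨univ, isOpen_univ, subset_univ _, .id hr.le⟩
  · exact ⟨thickening (ρ - k * r) S, isOpen_thickening,
      add_closedBall_subset_thickening (by gcongr),
      isNearIdentity_PhiIter hp hf hr hε hεr k⟩

theorem exists_analyticOn_inverse_PhiIter (hp : 1 ≤ p)
    (hf : IsPeriodicField p f (thickening ρ S) M) (hr : 0 < r) (hε : 0 ≤ ε)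
    (hεr : 25 / 4 * (ε * M) ≤ r) {d : ℝ} (hrd : r < d) (n : ℕ) :
    (∃ Ψ : ℝ → E → E, ∀ θ, AnalyticOn ℂ (Ψ θ) (S + closedBall 0 (ρ - (n + 1) * d)) ∧
      (∀ u ∈ S + closedBall 0 (ρ - (n + 1) * d), PhiIter f ε n θ (Ψ θ u) = u) ∧
      ∀ u ∈ S + closedBall 0 (ρ - (n + 1) * d), Ψ θ (PhiIter f ε n θ u) = u) ∧
    ∃ χ : E → E, AnalyticOn ℂ χ (S + closedBall 0 (ρ - (n + 1) * d)) ∧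
      (∀ u ∈ S + closedBall 0 (ρ - (n + 1) * d), thAvg (PhiIter f ε n) (χ u) = u) ∧
      ∀ u ∈ S + closedBall 0 (ρ - (n + 1) * d), χ (thAvg (PhiIter f ε n) u) = u := by
  have hΦ := isNearIdentity_PhiIter hp hf hr hε hεr n
  have h_ball : ∀ u ∈ thickening (ρ - n * r - r) S, ball u r ⊆ thickening (ρ - n * r) S :=
    fun _ hu => ball_subset_thickening_of_mem_thickening_sub hu
  have h_sub : S + closedBall 0 (ρ - (n + 1) * d) ⊆ thickening (ρ - n * r - r) S := by
    refine add_closedBall_subset_thickening ?_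
    rw [sub_sub, ← add_one_mul]
    gcongr
  constructor
  · choose Ψ hΨ h_right h_left using
      hΦ.exists_analyticOnNhd_inverse isOpen_thickening hr isOpen_thickening h_ball
    exact ⟨Ψ, fun θ => ⟨(hΨ θ).analyticOn.mono h_sub, fun u hu => h_right θ u (h_sub hu),
      fun u hu => h_left θ u (h_sub hu)⟩⟩
  · obtain ⟨χ, hχ, h_right, h_left⟩ :=
      hΦ.exists_analyticOnNhd_inverse_thAvg p.succ_pos isOpen_thickening hr isOpen_thickening h_ball
    exact ⟨χ, hχ.analyticOn.mono h_sub, fun u hu => h_right u (h_sub hu),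
      fun u hu => h_left u (h_sub hu)⟩

theorem statement4_general (hp : 1 ≤ p) {R : ℝ} (hM : 0 < M)
    (h_per : ∀ u ∈ S + closedBall 0 (2 * R), Function.Periodic (f · u) 1)
    (h_cont : ∀ u ∈ S + closedBall 0 (2 * R), ContDiff ℝ p (f · u))
    (h_anal : ∀ ν ≤ p, ∀ θ : ℝ,
      AnalyticOn ℂ (fun u => iteratedDeriv ν (f · u) θ) (S + closedBall 0 (2 * R)))
    (h_norm : ∀ ν ≤ p, ∀ θ : ℝ, ∀ u ∈ S + closedBall 0 (2 * R),
      3 ^ ν / ν.factorial * ‖iteratedDeriv ν (f · u) θ‖ ≤ M)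
    {n : ℕ} (hε : 0 < ε) (hnε : (n + 1) * ε ≤ R / (8 * M)) :
    (∀ k ≤ n, ∀ θ, AnalyticOn ℂ (PhiIter f ε k θ) (S + closedBall 0 (2 * R - k * (R / (n + 1))))) ∧
    (∃ Ψ : ℝ → E → E, ∀ θ, AnalyticOn ℂ (Ψ θ) (S + closedBall 0 R) ∧
      (∀ u ∈ S + closedBall 0 R, PhiIter f ε n θ (Ψ θ u) = u) ∧
      ∀ u ∈ S + closedBall 0 R, Ψ θ (PhiIter f ε n θ u) = u) ∧
    (∃ χ : E → E, AnalyticOn ℂ χ (S + closedBall 0 R) ∧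
      (∀ u ∈ S + closedBall 0 R, thAvg (PhiIter f ε n) (χ u) = u) ∧
      ∀ u ∈ S + closedBall 0 R, χ (thAvg (PhiIter f ε n) u) = u) ∧
    (∀ k ≤ n, ∀ u ∈ S + closedBall 0 (2 * R - k * (R / (n + 1))),
      ContDiff ℝ (p + 1) (PhiIter f ε k · u)) ∧
    (∀ k ≤ n, ∀ ν, 1 ≤ ν → ν ≤ p + 1 → ∀ θ : ℝ,
      AnalyticOn ℂ (fun u => iteratedDeriv ν (PhiIter f ε k · u) θ)
        (S + closedBall 0 (2 * R - k * (R / (n + 1))))) ∧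
    ∀ k ≤ n, ∀ ν, 1 ≤ ν → ν ≤ p + 1 → ∀ θ : ℝ,
      ∀ u ∈ S + closedBall 0 (2 * R - k * (R / (n + 1))),
        ‖iteratedDeriv ν (PhiIter f ε k · u) θ‖ ≤ 8 * ε * M * ν.factorial := by
  have hεM : 0 < ε * M := mul_pos hε hM
  have h_loss : 8 * (ε * M) ≤ R / (n + 1) := by
    rw [le_div_iff₀ (by positivity)] at hnε ⊢
    linarith
  set d : ℝ := R / (n + 1)
  have hd_mul : (n + 1) * d = R := mul_div_cancel₀ R (by positivity)
  have h_sub : thickening (2 * R) S ⊆ S + closedBall 0 (2 * R) := by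
    rw [← add_ball_zero]
    exact add_subset_add_left ball_subset_closedBall
  have hf : IsPeriodicField p f (thickening (2 * R) S) M := .of_norm_iteratedDeriv_le hM.le
    (fun u hu => h_per u (h_sub hu)) (fun u hu => h_cont u (h_sub hu))
    (fun ν hν θ => (h_anal ν hν θ).differentiableOn.mono h_sub)
    fun ν hν θ u hu => h_norm ν hν θ u (h_sub hu)
  have hr : 0 < 7 * (ε * M) := by positivity
  choose U hU hKU hΦ using exists_isOpen_isNearIdentity_PhiIter (d := d) hp hf hr hε.le
    (by linarith) (by linarith)
  obtain ⟨h_inv, h_inv_avg⟩ := exists_analyticOn_inverse_PhiIter (d := d) hp hf hr hε.le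
    (by linarith) (by linarith) n
  rw [show 2 * R - (n + 1) * d = R by linarith] at h_inv h_inv_avg
  exact ⟨fun k _ θ => ((hΦ k).analyticOnNhd (hU k) θ).analyticOn.mono (hKU k), h_inv, h_inv_avg,
    fun k _ u hu => mod_cast (hΦ k).contDiff (hKU k hu),
    fun k _ ν hν hνp θ =>
      ((hΦ k).analyticOnNhd_iteratedDeriv (hU k) hν hνp θ).analyticOn.mono (hKU k),
    fun k _ ν hν hνp θ u hu =>
      ((hΦ k).norm_iteratedDeriv_le hν hνp θ (hKU k hu)).trans (by gcongr; linarith)⟩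

end StroboscopicIteration

section Complexification

open scoped Pointwise

theorem Kset_eq_image_add_closedBall {X Xc : Type*} [NormedAddCommGroup X] [NormedSpace ℝ X]
    [NormedAddCommGroup Xc] [NormedSpace ℂ Xc] (ι : X →ₗᵢ[ℝ] Xc) (K : Set X) (ρ : ℝ) :
    Kset ι K ρ = ι '' closure K + closedBall 0 ρ := by
  ext z
  simp only [Kset, mem_ofPred_eq, Set.mem_add, exists_mem_image, mem_closedBall_zero_iff,
    eq_comm (a := z)]

end Complexification

/-- Proposition: under Assumptions (K) and (A_p), with `ε₀ = R/(8M)`, `rₙ = R/(n+1)`,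
`R_k = 2R − k rₙ` and `(n+1)ε ≤ ε₀`: the maps `Φ^[k]`, `k ≤ n`, are analytic on `K_{R_k}`;
`Φ^[n]` and `⟨Φ^[n]⟩` are invertible with analytic inverse on `K_R`; each `Φ^[k]` is
`(p+1)` times continuously differentiable in `θ`, its θ-derivatives are analytic on
`K_{R_k}`, and `‖∂_θ^ν Φ^[k]‖_{R_k} ≤ 8εM ν!` for `1 ≤ ν ≤ p+1`. -/
theorem statement4
    {X Xc : Type*} [NormedAddCommGroup X] [NormedSpace ℝ X] [CompleteSpace X]
    [NormedAddCommGroup Xc] [NormedSpace ℂ Xc] [CompleteSpace Xc]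
    (ι : X →ₗᵢ[ℝ] Xc)
    (K U0 : Set X) (hKopen : IsOpen K) (hKbdd : Bornology.IsBounded (closure K))
    (hU0open : IsOpen U0) (hU0K : U0 ⊆ K)
    (fX : ℝ → X → X) (fC : ℝ → Xc → Xc)
    (hper : ∀ u, Function.Periodic (fun θ => fX θ u) 1)
    (hperC : ∀ u, Function.Periodic (fun θ => fC θ u) 1)
    -- Assumption (K)
    (hAssK : ∀ u₀ ∈ U0, ∀ ε ∈ Set.Ioc (0:ℝ) 1, ∃ u : ℝ → X, u 0 = u₀ ∧
      ∀ t ∈ Set.Icc (0:ℝ) 1, HasDerivAt u (fX (t/ε) (u t)) t ∧ u t ∈ K)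
    -- Assumption (A_p)
    (p : ℕ) (hp : 1 ≤ p)
    (R M : ℝ) (hR : 0 < R) (hM : 0 < M)
    (hcontdiffθ : ∀ u, ContDiff ℝ p (fun θ => fC θ u))
    (hext : ∀ θ, ∀ x : X, ι x ∈ Kset ι K (2*R) → fC θ (ι x) = ι (fX θ x))
    (hanal : ∀ ν ≤ p, ∀ θ : ℝ,
      AnalyticOn ℂ (fun u => iteratedDeriv ν (fun τ => fC τ u) θ) (Kset ι K (2*R)))
    (hbound : ∀ σ ∈ Set.Ioc (0:ℝ) 3, ∀ ν ≤ p, ∀ θ : ℝ, ∀ u ∈ Kset ι K (2*R),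
      σ^ν / (Nat.factorial ν) * ‖iteratedDeriv ν (fun τ => fC τ u) θ‖ ≤ M)
    -- the regime of the proposition
    (ε₀ rn : ℝ) (hε₀ : ε₀ = R / (8*M))
    (n : ℕ) (hn : 1 ≤ n) (hrn : rn = R / (n+1))
    (Rk : ℕ → ℝ) (hRk : ∀ k, Rk k = 2*R - k * rn)
    (ε : ℝ) (hε : 0 < ε) (hnε : (n+1 : ℝ) * ε ≤ ε₀) :
    -- the maps Φ^[k] are analytic on K_{R_k}
    (∀ k ≤ n, ∀ θ : ℝ, AnalyticOn ℂ (PhiIter fC ε k θ) (Kset ι K (Rk k))) ∧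
    -- Φ^[n]_θ is invertible with analytic inverse on K_R, for every θ
    (∃ Ψ : ℝ → Xc → Xc, ∀ θ, AnalyticOn ℂ (Ψ θ) (Kset ι K R) ∧
        (∀ u ∈ Kset ι K R, PhiIter fC ε n θ (Ψ θ u) = u) ∧
        (∀ u ∈ Kset ι K R, Ψ θ (PhiIter fC ε n θ u) = u)) ∧
    -- ⟨Φ^[n]⟩ is invertible with analytic inverse on K_R
    (∃ χ : Xc → Xc, AnalyticOn ℂ χ (Kset ι K R) ∧
        (∀ u ∈ Kset ι K R, thAvg (PhiIter fC ε n) (χ u) = u) ∧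
        (∀ u ∈ Kset ι K R, χ (thAvg (PhiIter fC ε n) u) = u)) ∧
    -- each Φ^[k] is (p+1) times continuously differentiable w.r.t. θ
    (∀ k ≤ n, ∀ u ∈ Kset ι K (Rk k),
        ContDiff ℝ (p+1) (fun θ => PhiIter fC ε k θ u)) ∧
    -- the θ-derivatives are analytic in u on K_{R_k}
    (∀ k ≤ n, ∀ ν, 1 ≤ ν → ν ≤ p+1 → ∀ θ : ℝ,
        AnalyticOn ℂ (fun u => iteratedDeriv ν (fun τ => PhiIter fC ε k τ u) θ)
          (Kset ι K (Rk k))) ∧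
    -- ‖∂_θ^ν Φ^[k]‖_{R_k} ≤ 8 ε M ν!
    (∀ k ≤ n, ∀ ν, 1 ≤ ν → ν ≤ p+1 → ∀ θ : ℝ, ∀ u ∈ Kset ι K (Rk k),
        ‖iteratedDeriv ν (fun τ => PhiIter fC ε k τ u) θ‖ ≤
          8 * ε * M * (Nat.factorial ν)) := by
  obtain rfl := hrn
  obtain rfl := hε₀
  simp only [hRk, Kset_eq_image_add_closedBall] at hanal hbound ⊢
  exact statement4_general hp hM (fun u _ => hperC u) (fun u _ => hcontdiffθ u) hanal
    (hbound 3 (by norm_num)) hε hnε
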